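/- Let P ∈ ℤ[x] be a nonzero polynomial with deg P ≤ d and L(P) ≤ L, where L ≥ 3. Then |P(log 2)| ≥ exp{ −2.6·10⁵ · d² · (log L + d log d) · (1 + log d)⁻¹ }. -/

import Mathlib

/-!
The proof is Gelfond's method with Feldman's polynomials, applied to `θ = log 2`.

*Reduction.* Both the Mahler measure and the degree are additive over factors (after taking
logarithms), so it suffices to bound `|P(θ)|` below for irreducible `P`
(`irreducible_lower_bound`) and to multiply the bounds (`mahler_lower_bound`). The Mahler measure
of `P` is at most its length, and the length is at most `2 ^ deg P` times the Mahler measure.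
Since `d ≤ log L + d log d` for `L ≥ 3`, the passage from one to the other costs a factor `2`.

*Auxiliary function.* Let `P` be irreducible of degree `d`. By the pigeonhole principle
(`exists_small_forms`) there are integers `a`, not all zero, of absolute value at most `A`, such
that the function
`g(z) = ∑ a_{t,k,j} θ^t φ_k(z) 2^{jz}`, with `0 ≤ t < d`, `0 ≤ j < J`,
has its first `N` Taylor coefficients at `0` very small. Here the `φ_k` are Feldman's polynomials
`binom(z, b)^q binom(z, r)`, whose derivatives at integers have small denominators: the `i`-th
derivative becomes an integer after multiplication by `lcm(1, …, b)^i`. A Taylor estimate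
(`abs_le_of_small_taylor'`) shows that all `g^{(s)}(m)`, `0 ≤ m < M`, `0 ≤ s < S`, are then
small too. Up to the factor `lcm(1, …, b)^s`, such a value is `Q(θ)` for an explicit `Q ∈ ℤ[X]`
(`auxPoly`), because `2^{jm}` is an integer.

*Nonvanishing.* Let `β ≠ 0` be a complex root of `P`. Replacing `θ` by `β`, except in the values
`2^{jm}`, turns the numbers `g^{(s)}(m)` into values of the operators `p ↦ p' + jβp` on
polynomials. A Wronskian-type determinant (`zero_estimate`) shows that these cannot all vanish
when `J K < M (S + 1 - J)`, where `K` bounds the degrees of the polynomials. So some `Q` has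
`Q(β) ≠ 0`, that is, `P ∤ Q`.

*Conclusion.* The resultant of `P` and `Q` is a nonzero integer, hence at least `1` in absolute
value; expanding it by means of the values at `θ` shows that `|P(θ)|` and `|Q(θ)|` cannot both
be small (`liouville`). As `Q(θ)` is small by construction, `P(θ)` is not (`core_lower_bound`).
The parameters are of the size `J = 40 d`, `M = 70 d b`, `K = yM`, `S = J(y + 1)`, `N = JK`, where
`b` is about `log L(P) / (d (1 + log d))` and `y` about `20 d / (1 + log d)`; the resulting numerical
condition is `parameter_inequality`.
-/

open Polynomial

/-- The length of an integer polynomial: the sum of the absolute values of its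
coefficients. -/
noncomputable def polyLength (P : Polynomial ℤ) : ℝ :=
  ∑ i ∈ Finset.range (P.natDegree + 1), (|P.coeff i| : ℝ)

/-! ### Weighted lengths, and resultants of integer polynomials -/

/-- The weighted length `∑ |a_i| ρ ^ i` of a real polynomial `∑ a_i X ^ i`. For `ρ ≥ 0` it is
subadditive and submultiplicative; for `ρ = 1` it is the usual length. -/
noncomputable def wnorm (ρ : ℝ) (p : ℝ[X]) : ℝ := p.sum fun i a => |a| * ρ ^ i

lemma wnorm_eq_sum_range (ρ : ℝ) (p : ℝ[X]) (n : ℕ) (hn : p.natDegree < n) :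
    wnorm ρ p = ∑ i ∈ Finset.range n, |p.coeff i| * ρ ^ i := by
  unfold wnorm
  exact Polynomial.sum_over_range' p (by simp) n hn

lemma wnorm_nonneg {ρ : ℝ} (hρ : 0 ≤ ρ) (p : ℝ[X]) : 0 ≤ wnorm ρ p := by
  unfold wnorm Polynomial.sum
  exact Finset.sum_nonneg fun i _ => by positivity

lemma wnorm_add_le {ρ : ℝ} (hρ : 0 ≤ ρ) (p q : ℝ[X]) :
    wnorm ρ (p + q) ≤ wnorm ρ p + wnorm ρ q := by
  set n := max p.natDegree q.natDegree + 1
  have h1 : p.natDegree < n := by omega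
  have h2 : q.natDegree < n := by omega
  have h3 : (p + q).natDegree < n := lt_of_le_of_lt (natDegree_add_le p q) (by omega)
  rw [wnorm_eq_sum_range ρ _ n h1, wnorm_eq_sum_range ρ _ n h2, wnorm_eq_sum_range ρ _ n h3,
    ← Finset.sum_add_distrib]
  refine Finset.sum_le_sum fun i _ => ?_
  rw [coeff_add, ← add_mul]
  gcongr
  exact abs_add_le _ _

lemma wnorm_monomial (ρ : ℝ) (n : ℕ) (a : ℝ) : wnorm ρ (monomial n a) = |a| * ρ ^ n := by
  unfold wnorm
  rw [sum_monomial_index]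
  simp

lemma wnorm_zero (ρ : ℝ) : wnorm ρ 0 = 0 := by simp [wnorm]

lemma wnorm_C (ρ : ℝ) (a : ℝ) : wnorm ρ (C a) = |a| := by
  rw [← monomial_zero_left, wnorm_monomial]; simp

lemma wnorm_monomial_mul (ρ : ℝ) (n : ℕ) (a : ℝ) (r : ℝ[X]) :
    wnorm ρ (monomial n a * r) = |a| * ρ ^ n * wnorm ρ r := by
  have h3 : (monomial n a * r).natDegree < n + (r.natDegree + 1) := by
    have := natDegree_mul_le (p := monomial n a) (q := r)
    have h4 := natDegree_monomial_le a (m := n)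
    omega
  rw [wnorm_eq_sum_range ρ _ _ h3, wnorm_eq_sum_range ρ r _ (Nat.lt_succ_self _),
    Finset.sum_range_add, Finset.mul_sum]
  have : ∑ x ∈ Finset.range n, |(monomial n a * r).coeff x| * ρ ^ x = 0 := by
    refine Finset.sum_eq_zero fun x hx => ?_
    rw [Finset.mem_range] at hx
    rw [← C_mul_X_pow_eq_monomial, mul_assoc, coeff_C_mul, coeff_X_pow_mul', if_neg (by omega)]
    simp
  rw [this, zero_add]
  refine Finset.sum_congr rfl fun x _ => ?_
  rw [← C_mul_X_pow_eq_monomial, mul_assoc, coeff_C_mul, coeff_X_pow_mul', if_pos (by omega),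
    Nat.add_sub_cancel_left, abs_mul, pow_add]
  ring

lemma wnorm_mul_le {ρ : ℝ} (hρ : 0 ≤ ρ) (p q : ℝ[X]) :
    wnorm ρ (p * q) ≤ wnorm ρ p * wnorm ρ q := by
  rw [p.as_sum_range, Finset.sum_mul]
  have h : ∀ s : Finset ℕ, wnorm ρ (∑ i ∈ s, monomial i (p.coeff i) * q) ≤
      ∑ i ∈ s, |p.coeff i| * ρ ^ i * wnorm ρ q := by
    intro s
    induction s using Finset.induction_on with
    | empty => simp [wnorm_zero]
    | insert a s ha ih =>
      rw [Finset.sum_insert ha, Finset.sum_insert ha]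
      exact (wnorm_add_le hρ _ _).trans (add_le_add (wnorm_monomial_mul _ _ _ _).le ih)
  refine (h _).trans ?_
  rw [← Finset.sum_mul, ← wnorm_eq_sum_range ρ p _ (Nat.lt_succ_self _), ← p.as_sum_range]

lemma wnorm_pow_le {ρ : ℝ} (hρ : 0 ≤ ρ) (p : ℝ[X]) (n : ℕ) :
    wnorm ρ (p ^ n) ≤ wnorm ρ p ^ n := by
  induction n with
  | zero => rw [pow_zero, pow_zero, ← C_1, wnorm_C]; simp
  | succ n ih =>
    rw [pow_succ, pow_succ]
    exact (wnorm_mul_le hρ _ _).trans (mul_le_mul_of_nonneg_right ih (wnorm_nonneg hρ _))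

lemma wnorm_sum_le {ρ : ℝ} (hρ : 0 ≤ ρ) {ι : Type*} (s : Finset ι) (f : ι → ℝ[X]) :
    wnorm ρ (∑ i ∈ s, f i) ≤ ∑ i ∈ s, wnorm ρ (f i) := by
  classical
  induction s using Finset.induction_on with
  | empty => simp [wnorm_zero]
  | insert a s ha ih =>
    rw [Finset.sum_insert ha, Finset.sum_insert ha]
    exact (wnorm_add_le hρ _ _).trans (add_le_add le_rfl ih)

/-- Hadamard-type bound: a determinant is at most the product of the `ℓ¹` norms of the columns. -/
lemma abs_det_le_prod_sum {n : Type*} [Fintype n] [DecidableEq n] (B : Matrix n n ℝ) :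
    |B.det| ≤ ∏ j, ∑ i, |B i j| := by
  rw [Matrix.det_apply, Finset.prod_univ_sum]
  refine (Finset.abs_sum_le_sum_abs _ _).trans ?_
  have h1 : ∀ σ : Equiv.Perm n, |Equiv.Perm.sign σ • ∏ i, B (σ i) i| = ∏ i, |B (σ i) i| := by
    intro σ
    rw [← Finset.abs_prod]
    rcases Int.units_eq_one_or (Equiv.Perm.sign σ) with h | h <;> simp [h]
  simp_rw [h1]
  rw [Fintype.piFinset_univ]
  rw [← Finset.sum_image (s := (Finset.univ : Finset (Equiv.Perm n)))
    (g := fun σ : Equiv.Perm n => (σ : n → n)) (f := fun f : n → n => ∏ i, |B (f i) i|)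
    (fun a _ b _ h => Equiv.coe_fn_injective h)]
  exact Finset.sum_le_univ_sum_of_nonneg fun f => Finset.prod_nonneg fun i _ => abs_nonneg _

lemma sum_shift_le (N j n : ℕ) (c : ℕ → ℝ) (hc : ∀ i, 0 ≤ c i) :
    ∑ i : Fin N, (if (i : ℕ) ∈ Set.Icc j (j + n) then c (i - j) else 0) ≤
      ∑ i ∈ Finset.range (n + 1), c i := by
  rw [Fin.sum_univ_eq_sum_range (fun i => if i ∈ Set.Icc j (j + n) then c (i - j) else 0) N,
    ← Finset.sum_filter]
  rw [← Finset.sum_image (f := c) (g := fun i => i - j)]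
  · refine Finset.sum_le_sum_of_subset_of_nonneg ?_ fun i _ _ => hc i
    intro x hx
    simp only [Finset.mem_image, Finset.mem_filter, Set.mem_Icc, Finset.mem_range] at hx ⊢
    obtain ⟨a, ha, rfl⟩ := hx
    omega
  · intro a ha b hb h
    simp only [Finset.coe_filter, Set.mem_ofPred_eq, Set.mem_Icc] at ha hb h
    omega

lemma sum_shift_eval (N j n : ℕ) (hN : j + n < N) (f : ℝ[X]) (hf : f.natDegree ≤ n) (x : ℝ) :
    ∑ i : Fin N, x ^ (i : ℕ) * (if (i : ℕ) ∈ Set.Icc j (j + n) then f.coeff (i - j) else 0) =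
      x ^ j * f.eval x := by
  rw [Fin.sum_univ_eq_sum_range
    (fun i => x ^ i * if i ∈ Set.Icc j (j + n) then f.coeff (i - j) else 0) N]
  rw [eval_eq_sum_range' (Nat.lt_succ_of_le hf), Finset.mul_sum]
  simp_rw [mul_ite, mul_zero]
  rw [← Finset.sum_filter]
  refine Finset.sum_bij' (fun i _ => i - j) (fun i _ => i + j) ?_ ?_ ?_ ?_ ?_
  · intro a ha
    simp only [Finset.mem_filter, Set.mem_Icc, Finset.mem_range] at ha ⊢
    omega
  · intro a ha
    simp only [Finset.mem_filter, Set.mem_Icc, Finset.mem_range] at ha ⊢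
    omega
  · intro a ha
    simp only [Finset.mem_filter, Set.mem_Icc, Finset.mem_range] at ha ⊢
    omega
  · intro a ha
    simp
  · intro a ha
    simp only [Finset.mem_filter, Set.mem_Icc, Finset.mem_range] at ha
    have : x ^ a = x ^ j * x ^ (a - j) := by rw [← pow_add]; congr 1; omega
    rw [this]; ring

/-- If `f` and `g` are both small, relative to their lengths, at a point `x ∈ [0, 1]`, then their
resultant is small: adding `x ^ i` times the `i`-th row of the Sylvester matrix to the row of the
constant coefficients turns that row into multiples of `f(x)` and `g(x)`. -/
lemma abs_resultant_le (f g : ℝ[X]) (hf0 : 0 < f.natDegree) (x : ℝ)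
    (hx0 : 0 ≤ x) (hx1 : x ≤ 1) (Lf Lg : ℝ)
    (hf : wnorm 1 f ≤ Lf) (hg : wnorm 1 g ≤ Lg) (δ : ℝ) (hδ : 0 < δ)
    (h1 : |f.eval x| ≤ δ * Lf) (h2 : |g.eval x| ≤ δ * Lg) :
    |resultant f g| ≤ δ * ((2 * Lf) ^ g.natDegree * (2 * Lg) ^ f.natDegree) := by
  set m := f.natDegree with hm
  set n := g.natDegree with hn
  set A := sylvester f g m n with hA
  let i0 : Fin (m + n) := ⟨0, by omega⟩
  have hrow : ∑ k : Fin (m + n), (x ^ (k : ℕ)) • A k =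
      fun j => j.addCases (fun j₁ : Fin m => x ^ (j₁ : ℕ) * g.eval x)
        (fun j₁ : Fin n => x ^ (j₁ : ℕ) * f.eval x) := by
    funext j
    simp only [Finset.sum_apply, Pi.smul_apply, smul_eq_mul]
    induction j using Fin.addCases with
    | left j =>
      simp only [hA, sylvester, Matrix.of_apply, Fin.addCases_left]
      exact sum_shift_eval _ _ _ (by omega) g le_rfl x
    | right j =>
      simp only [hA, sylvester, Matrix.of_apply, Fin.addCases_right]
      exact sum_shift_eval _ _ _ (by omega) f le_rfl x
  have hdet := Matrix.det_updateRow_sum A i0 (fun k => x ^ (k : ℕ))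
  have hdet2 := Matrix.det_updateRow_smul A i0 (δ⁻¹) (∑ k : Fin (m + n), (x ^ (k : ℕ)) • A k)
  rw [hdet] at hdet2
  simp only [i0, pow_zero, smul_eq_mul, one_mul] at hdet2
  have hb := abs_det_le_prod_sum (A.updateRow i0 (δ⁻¹ • ∑ k : Fin (m + n), (x ^ (k : ℕ)) • A k))
  rw [hdet2, abs_mul, abs_of_pos (inv_pos.2 hδ)] at hb
  have hcol : ∀ j, ∑ i, |(A.updateRow i0 (δ⁻¹ • ∑ k : Fin (m + n), (x ^ (k : ℕ)) • A k)) i j| ≤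
      |δ⁻¹ * (∑ k : Fin (m + n), (x ^ (k : ℕ)) • A k) j| + ∑ i, |A i j| := by
    intro j
    rw [← Finset.add_sum_erase _ _ (Finset.mem_univ i0)]
    refine add_le_add ?_ ?_
    · simp [Matrix.updateRow_self]
    · calc _ = ∑ i ∈ Finset.univ.erase i0, |A i j| := by
            refine Finset.sum_congr rfl fun i hi => ?_
            rw [Matrix.updateRow_ne (Finset.ne_of_mem_erase hi)]
        _ ≤ _ := Finset.sum_le_sum_of_subset_of_nonneg (Finset.erase_subset _ _)
            fun _ _ _ => abs_nonneg _
  have hpow : ∀ j : ℕ, 0 ≤ x ^ j ∧ x ^ j ≤ 1 := fun j =>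
    ⟨pow_nonneg hx0 j, pow_le_one₀ hx0 hx1⟩
  have small : ∀ (j : ℕ) (v Lv : ℝ), |v| ≤ δ * Lv → |δ⁻¹ * (x ^ j * v)| ≤ Lv := by
    intro j v Lv hv
    rw [abs_mul, abs_mul, abs_of_pos (inv_pos.2 hδ), abs_of_nonneg (hpow j).1]
    calc δ⁻¹ * (x ^ j * |v|) ≤ δ⁻¹ * (1 * (δ * Lv)) := by
          gcongr
          exact (hpow j).2
      _ = Lv := by field_simp
  have hprod : ∏ j, ∑ i, |(A.updateRow i0 (δ⁻¹ • ∑ k : Fin (m + n), (x ^ (k : ℕ)) • A k)) i j| ≤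
      (2 * Lf) ^ n * (2 * Lg) ^ m := by
    calc _ ≤ ∏ j : Fin (m + n), (Fin.addCases (fun _ => 2 * Lg) (fun _ => 2 * Lf) j : ℝ) := by
          refine Finset.prod_le_prod (fun j _ => Finset.sum_nonneg fun i _ => abs_nonneg _)
            fun j _ => (hcol j).trans ?_
          rw [hrow]
          induction j using Fin.addCases with
          | left j =>
            simp only [Fin.addCases_left]
            have : ∑ i, |A i (Fin.castAdd n j)| ≤ Lg := by
              refine le_trans ?_ hg
              rw [wnorm_eq_sum_range 1 g (n + 1) (by omega)]
              simp only [one_pow, mul_one]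
              refine le_trans (le_of_eq ?_)
                (sum_shift_le (m + n) j n (fun i => |g.coeff i|) fun i => abs_nonneg _)
              refine Finset.sum_congr rfl fun i _ => ?_
              simp only [hA, sylvester, Matrix.of_apply, Fin.addCases_left]
              split_ifs <;> simp
            linarith [small j _ _ h2]
          | right j =>
            simp only [Fin.addCases_right]
            have : ∑ i, |A i (Fin.natAdd m j)| ≤ Lf := by
              refine le_trans ?_ hf
              rw [wnorm_eq_sum_range 1 f (m + 1) (by omega)]
              simp only [one_pow, mul_one]
              refine le_trans (le_of_eq ?_)
                (sum_shift_le (m + n) j m (fun i => |f.coeff i|) fun i => abs_nonneg _)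
              refine Finset.sum_congr rfl fun i _ => ?_
              simp only [hA, sylvester, Matrix.of_apply, Fin.addCases_right]
              split_ifs <;> simp
            linarith [small j _ _ h1]
      _ = _ := by
          rw [Fin.prod_univ_add]
          simp [mul_comm]
  have := hb.trans hprod
  rw [inv_mul_le_iff₀ hδ] at this
  exact this

/-- Liouville-type inequality: if `P` is irreducible and `Q` does not vanish at a root
`β` of `P`, then `P` and `Q` cannot both be small at a point `x ∈ [0, 1]`, because their resultant
is a nonzero integer. -/
lemma liouville (P Q : ℤ[X]) (hP : Irreducible P) (hd : 0 < P.natDegree) (β : ℂ)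
    (hβ : aeval β P = 0) (hQ : aeval β Q ≠ 0) (q : ℕ) (hq : Q.natDegree ≤ q)
    (LP LQ : ℝ) (hLP1 : 1 ≤ LP) (hLQ1 : 1 ≤ LQ)
    (hLP : wnorm 1 (P.map (Int.castRingHom ℝ)) ≤ LP)
    (hLQ : wnorm 1 (Q.map (Int.castRingHom ℝ)) ≤ LQ)
    (x : ℝ) (hx0 : 0 ≤ x) (hx1 : x ≤ 1) :
    LP ≤ |aeval x P| * ((2 * LP) ^ q * (2 * LQ) ^ P.natDegree) ∨
      LQ ≤ |aeval x Q| * ((2 * LP) ^ q * (2 * LQ) ^ P.natDegree) := by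
  have hinjQ : Function.Injective (Int.castRingHom ℚ) := Int.cast_injective
  have hinjR : Function.Injective (Int.castRingHom ℝ) := Int.cast_injective
  have hres : resultant P Q ≠ 0 := by
    intro h0
    have h1 : resultant (P.map (Int.castRingHom ℚ)) (Q.map (Int.castRingHom ℚ)) = 0 := by
      rw [natDegree_map_eq_of_injective hinjQ, natDegree_map_eq_of_injective hinjQ,
        resultant_map_map, h0, map_zero]
    rw [resultant_eq_zero_iff] at h1
    apply h1.2
    have hirr : Irreducible (P.map (Int.castRingHom ℚ)) :=
      (IsPrimitive.Int.irreducible_iff_irreducible_map_cast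
        (hP.isPrimitive hd.ne')).1 hP
    rw [hirr.coprime_iff_not_dvd]
    intro hdvd
    have := aeval_eq_zero_of_dvd_aeval_eq_zero hdvd (x := β) (by
      simpa [aeval_map_algebraMap] using (by
        have := aeval_map_algebraMap ℚ β P
        rw [hβ] at this
        simpa using this))
    apply hQ
    have h3 := aeval_map_algebraMap ℚ β Q
    rw [← h3]
    simpa using this
  have hge : 1 ≤ |resultant (P.map (Int.castRingHom ℝ)) (Q.map (Int.castRingHom ℝ))| := by
    rw [natDegree_map_eq_of_injective hinjR, natDegree_map_eq_of_injective hinjR,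
        resultant_map_map]
    have := Int.one_le_abs hres
    rw [eq_intCast]
    exact_mod_cast this
  by_contra! hcon
  obtain ⟨c1, c2⟩ := hcon
  set T := (2 * LP) ^ q * (2 * LQ) ^ P.natDegree with hT
  have hTpos : 0 < T := by positivity
  have e1 : ∀ F : ℤ[X], (F.map (Int.castRingHom ℝ)).eval x = aeval x F := by
    intro F
    rw [eval_map, aeval_def]
    rfl
  have hd' : 0 < (P.map (Int.castRingHom ℝ)).natDegree := by
    rw [natDegree_map_eq_of_injective hinjR]; exact hd
  set δ := max (|aeval x P| / LP) (|aeval x Q| / LQ) with hδ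
  have hLP0 : 0 < LP := by linarith
  have hLQ0 : 0 < LQ := by linarith
  have hδT : δ * T < 1 := by
    rw [hδ, max_mul_of_nonneg _ _ hTpos.le]
    apply max_lt
    · rw [div_mul_eq_mul_div, div_lt_one hLP0]; exact c1
    · rw [div_mul_eq_mul_div, div_lt_one hLQ0]; exact c2
  have hδ0 : 0 ≤ δ := le_max_of_le_left (by positivity)
  obtain ⟨δ', hδ'1, hδ'2⟩ := exists_between (show δ < 1 / T by rwa [lt_div_iff₀ hTpos])
  have := abs_resultant_le _ _ hd' x hx0 hx1 LP LQ hLP hLQ δ' (by linarith)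
    (by
      rw [e1, ← div_le_iff₀ hLP0]
      exact (le_max_left _ _).trans hδ'1.le)
    (by
      rw [e1, ← div_le_iff₀ hLQ0]
      exact (le_max_right _ _).trans hδ'1.le)
  rw [natDegree_map_eq_of_injective hinjR, natDegree_map_eq_of_injective hinjR] at this hge
  have h5 : (2 * LP) ^ Q.natDegree * (2 * LQ) ^ P.natDegree ≤ T := by
    rw [hT]
    gcongr
    linarith
  have h6 : δ' * T < 1 := by rwa [lt_div_iff₀ hTpos] at hδ'2
  nlinarith [mul_le_mul_of_nonneg_left h5 (hδ0.trans hδ'1.le)]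

/-! ### The zero estimate -/

/-- The operator `p ↦ p' + a p`, which satisfies `(p(z) exp(a z))' = (twist a p)(z) exp(a z)`. -/
noncomputable def twist {F : Type*} [CommRing F] (a : F) (p : F[X]) : F[X] :=
  derivative p + C a * p

lemma natDegree_twist_iterate_le {F : Type*} [CommRing F] (a : F) (p : F[X]) (s : ℕ) :
    ((twist a)^[s] p).natDegree ≤ p.natDegree := by
  induction s with
  | zero => simp
  | succ s ih =>
    rw [Function.iterate_succ_apply']
    refine (natDegree_add_le _ _).trans (max_le ?_ ?_)
    · exact (natDegree_derivative_le _).trans (by omega)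
    · exact (natDegree_C_mul_le _ _).trans ih

lemma coeff_twist_iterate {F : Type*} [CommRing F] (a : F) (p : F[X]) (s : ℕ) :
    ((twist a)^[s] p).coeff p.natDegree = a ^ s * p.leadingCoeff := by
  induction s with
  | zero => simp
  | succ s ih =>
    rw [Function.iterate_succ_apply', twist, coeff_add, coeff_C_mul, ih, coeff_derivative,
      coeff_eq_zero_of_natDegree_lt
        (lt_of_le_of_lt (natDegree_twist_iterate_le a p s) (Nat.lt_succ_self _))]
    ring

lemma twist_iterate_eq_sum {F : Type*} [CommRing F] (a : F) (p : F[X]) (s : ℕ) :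
    (twist a)^[s] p =
      ∑ i ∈ Finset.range (s + 1), C ((s.choose i : F) * a ^ (s - i)) * derivative^[i] p := by
  have h1 : twist a = ⇑((derivative : F[X] →ₗ[F] F[X]) + a • (1 : Module.End F F[X])) := by
    funext q
    simp [twist, smul_eq_C_mul]
  have h2 : Commute (derivative : Module.End F F[X]) (a • (1 : Module.End F F[X])) :=
    (Commute.one_right _).smul_right a
  rw [h1, ← Module.End.pow_apply, h2.add_pow, LinearMap.sum_apply]
  refine Finset.sum_congr rfl fun i _ => ?_
  rw [_root_.smul_pow, one_pow, ← nsmul_eq_mul']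
  simp only [LinearMap.smul_apply, mul_smul_comm, mul_one, Module.End.pow_apply]
  rw [C_mul, smul_eq_C_mul, nsmul_eq_mul, mul_assoc]
  simp

/-- The coefficient of a product at the sum of degree bounds is the product of the coefficients at
those bounds. -/
lemma coeff_prod_sum {F : Type*} [CommRing F] {ι : Type*} (t : Finset ι) (f : ι → F[X])
    (e : ι → ℕ) (h : ∀ i ∈ t, (f i).natDegree ≤ e i) :
    (∏ i ∈ t, f i).coeff (∑ i ∈ t, e i) = ∏ i ∈ t, (f i).coeff (e i) := by
  classical
  induction t using Finset.induction_on with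
  | empty => simp
  | insert a t ha ih =>
    rw [Finset.prod_insert ha, Finset.sum_insert ha, Finset.prod_insert ha,
      coeff_mul_add_eq_of_natDegree_le (h a (Finset.mem_insert_self _ _)), ih]
    · exact fun i hi => h i (Finset.mem_insert_of_mem hi)
    · exact (natDegree_prod_le _ _).trans
        (Finset.sum_le_sum fun i hi => h i (Finset.mem_insert_of_mem hi))

lemma X_pow_dvd_of_iterate_derivative {F : Type*} [Field F] [CharZero F] (k : ℕ)
    (G : PowerSeries F)
    (h : ∀ i < k, PowerSeries.constantCoeff ((PowerSeries.derivative F)^[i] G) = 0) :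
    PowerSeries.X ^ k ∣ G := by
  rw [PowerSeries.X_pow_dvd_iff]
  intro m hm
  have := h m hm
  rw [PowerSeries.constantCoeff_iterate_derivative] at this
  have hf : (m.factorial : F) ≠ 0 := by exact_mod_cast m.factorial_ne_zero
  simpa [hf] using this

open PowerSeries in
/-- Local part of the zero estimate. If the exponential polynomial `∑ p_i(z) exp(c_i β z)`, with
`exp(β x)` formally replaced by `y`, vanishes to order `S` at `x`, then the Wronskian determinant
of the `t` summands, divided by the exponentials, vanishes at `x` to order at least `S - (t - 1)`:
by Cramer's rule it is, up to a unit, a combination of the derivatives of order less than `t` of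
the exponential polynomial. -/
lemma dvd_det_of_vanishing {t : ℕ} (ht : 0 < t) (c : Fin t → ℕ) (β : ℂ) (p : Fin t → ℂ[X])
    (S : ℕ) (x y : ℂ) (hy : y ≠ 0)
    (h : ∀ s < S, ∑ i, ((twist ((c i : ℂ) * β))^[s] (p i)).eval x * y ^ c i = 0) :
    (Polynomial.X - Polynomial.C x) ^ (S + 1 - t) ∣
      (Matrix.of fun (s i : Fin t) => (twist ((c i : ℂ) * β))^[(s : ℕ)] (p i)).det := by
  set 𝓜 : Matrix (Fin t) (Fin t) ℂ[X] :=
    Matrix.of fun (s i : Fin t) => (twist ((c i : ℂ) * β))^[(s : ℕ)] (p i) with h𝓜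
  -- `ψ` is the Taylor expansion at `x`; `u` is the formal series of `y * exp (β z)`
  let ψ : ℂ[X] →+* PowerSeries ℂ :=
    (Polynomial.coeToPowerSeries.ringHom).comp (Polynomial.compRingHom (Polynomial.X + Polynomial.C x))
  have hψd : ∀ q, PowerSeries.derivative ℂ (ψ q) = ψ (Polynomial.derivative q) := by
    intro q
    simp [ψ, PowerSeries.derivative_coe, Polynomial.derivative_comp]
  have hψ0 : ∀ q, PowerSeries.constantCoeff (ψ q) = q.eval x := by
    intro q
    simp [ψ, Polynomial.constantCoeff_coe, Polynomial.coeff_zero_eq_eval_zero, Polynomial.eval_comp]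
  have hψC : ∀ a, ψ (Polynomial.C a) = PowerSeries.C a := by
    intro a
    simp [ψ]
  let u : PowerSeries ℂ := PowerSeries.mk fun n => y * β ^ n / (n.factorial : ℂ)
  have hu : PowerSeries.derivative ℂ u = PowerSeries.C β * u := by
    ext n
    rw [PowerSeries.coeff_derivative, PowerSeries.coeff_C_mul, PowerSeries.coeff_mk,
      PowerSeries.coeff_mk, Nat.factorial_succ, pow_succ]
    have hf : (n.factorial : ℂ) ≠ 0 := by exact_mod_cast n.factorial_ne_zero
    have hf' : (n : ℂ) + 1 ≠ 0 := by exact_mod_cast n.succ_ne_zero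
    push_cast
    field_simp
  have hu0 : PowerSeries.constantCoeff u = y := by
    rw [← PowerSeries.coeff_zero_eq_constantCoeff_apply, PowerSeries.coeff_mk]; simp
  have hun : ∀ n : ℕ, PowerSeries.derivative ℂ (u ^ n) = PowerSeries.C ((n : ℂ) * β) * u ^ n := by
    intro n
    induction n with
    | zero => simp
    | succ n ih =>
      rw [pow_succ, Derivation.leibniz, ih, hu]
      simp only [smul_eq_mul]
      push_cast
      simp only [add_mul, map_add, map_mul, one_mul]
      ring
  have hone : ∀ q (n : ℕ), PowerSeries.derivative ℂ (ψ q * u ^ n) =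
      ψ (twist ((n : ℂ) * β) q) * u ^ n := by
    intro q n
    rw [Derivation.leibniz, hun, hψd, twist, map_add, map_mul ψ, hψC]
    simp only [smul_eq_mul]
    ring
  set G : PowerSeries ℂ := ∑ i, ψ (p i) * u ^ c i with hG
  have hiter : ∀ s : ℕ, (PowerSeries.derivative ℂ)^[s] G =
      ∑ i, ψ ((twist ((c i : ℂ) * β))^[s] (p i)) * u ^ c i := by
    intro s
    induction s with
    | zero => simp [hG]
    | succ s ih =>
      rw [Function.iterate_succ_apply', ih, map_sum]
      refine Finset.sum_congr rfl fun i _ => ?_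
      rw [hone, Function.iterate_succ_apply']
  have hdvd : ∀ s : ℕ, PowerSeries.X ^ (S - s) ∣ (PowerSeries.derivative ℂ)^[s] G := by
    intro s
    apply X_pow_dvd_of_iterate_derivative
    intro i hi
    rw [← Function.iterate_add_apply, hiter, map_sum, ← h (i + s) (by omega)]
    refine Finset.sum_congr rfl fun j _ => ?_
    rw [map_mul, hψ0, map_pow, hu0]
  -- Cramer's rule: the determinant times `u ^ c i` is a combination of the derivatives of `G`
  have hcr : ψ 𝓜.det * u ^ c ⟨0, ht⟩ =
      ∑ s : Fin t, (ψ.mapMatrix 𝓜).adjugate ⟨0, ht⟩ s * (PowerSeries.derivative ℂ)^[(s : ℕ)] G := by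
    have h1 : (ψ.mapMatrix 𝓜).mulVec (fun i => u ^ c i) =
        fun s : Fin t => (PowerSeries.derivative ℂ)^[(s : ℕ)] G := by
      funext s
      rw [hiter]
      simp [Matrix.mulVec, dotProduct, h𝓜]
    have h2 : (ψ.mapMatrix 𝓜).adjugate.mulVec ((ψ.mapMatrix 𝓜).mulVec (fun i => u ^ c i)) =
        (ψ.mapMatrix 𝓜).det • fun i => u ^ c i := by
      rw [Matrix.mulVec_mulVec, Matrix.adjugate_mul, Matrix.smul_mulVec, Matrix.one_mulVec]
    rw [h1] at h2
    have h3 := congrFun h2 ⟨0, ht⟩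
    rw [← RingHom.map_det] at h3
    simp only [Pi.smul_apply, smul_eq_mul] at h3
    rw [← h3]
    rfl
  have hX : PowerSeries.X ^ (S + 1 - t) ∣ ψ 𝓜.det * u ^ c ⟨0, ht⟩ := by
    rw [hcr]
    refine Finset.dvd_sum fun s _ => Dvd.dvd.mul_left ?_ _
    exact (pow_dvd_pow _ (by omega)).trans (hdvd s)
  have hunit : IsUnit (u ^ c ⟨0, ht⟩) := by
    apply IsUnit.pow
    rw [PowerSeries.isUnit_iff_constantCoeff, hu0]
    exact hy.isUnit
  rw [hunit.dvd_mul_right] at hX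
  rw [Polynomial.X_sub_C_pow_dvd_iff, Polynomial.X_pow_dvd_iff]
  rw [PowerSeries.X_pow_dvd_iff] at hX
  intro d hd
  have := hX d hd
  simpa [ψ] using this

/-- The top coefficient of the Wronskian determinant is the product of the leading coefficients and
a Vandermonde determinant in the distinct numbers `c_i β`. -/
lemma det_twist_ne_zero {t : ℕ} (c : Fin t → ℕ) (hc : Function.Injective c) (β : ℂ) (hβ : β ≠ 0)
    (p : Fin t → ℂ[X]) (hp : ∀ i, p i ≠ 0) :
    (Matrix.of fun (s i : Fin t) => (twist ((c i : ℂ) * β))^[(s : ℕ)] (p i)).det ≠ 0 := by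
  set 𝓜 : Matrix (Fin t) (Fin t) ℂ[X] :=
    Matrix.of fun (s i : Fin t) => (twist ((c i : ℂ) * β))^[(s : ℕ)] (p i) with h𝓜
  intro h0
  have h1 : 𝓜.det.coeff (∑ i, (p i).natDegree) =
      (Matrix.of fun (s i : Fin t) => ((c i : ℂ) * β) ^ (s : ℕ) * (p i).leadingCoeff).det := by
    rw [Matrix.det_apply, Matrix.det_apply, finsetSum_coeff]
    refine Finset.sum_congr rfl fun σ _ => ?_
    rw [coeff_smul]
    congr 1
    rw [coeff_prod_sum]
    · refine Finset.prod_congr rfl fun i _ => ?_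
      simp only [h𝓜, Matrix.of_apply]
      exact coeff_twist_iterate _ _ _
    · intro i _
      exact natDegree_twist_iterate_le _ _ _
  have h2 : (Matrix.of fun (s i : Fin t) => ((c i : ℂ) * β) ^ (s : ℕ) * (p i).leadingCoeff) =
      (Matrix.vandermonde fun i => (c i : ℂ) * β).transpose *
        Matrix.diagonal fun i => (p i).leadingCoeff := by
    ext s i
    simp [Matrix.mul_diagonal, Matrix.vandermonde]
  rw [h0, h2, Matrix.det_mul, Matrix.det_transpose, Matrix.det_diagonal, coeff_zero] at h1
  have h3 : (Matrix.vandermonde fun i => (c i : ℂ) * β).det ≠ 0 := by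
    rw [Matrix.det_vandermonde_ne_zero_iff]
    intro a b hab
    have : (c a : ℂ) = c b := mul_right_cancel₀ hβ hab
    exact hc (by exact_mod_cast this)
  have h4 : ∏ i, (p i).leadingCoeff ≠ 0 :=
    Finset.prod_ne_zero_iff.2 fun i _ => leadingCoeff_ne_zero.2 (hp i)
  exact mul_ne_zero h3 h4 h1.symm

/-- The zero estimate when all the polynomials are nonzero: the Wronskian determinant has degree at
most `t K` and a zero of order at least `S + 1 - t` at each of `0, …, M - 1`. -/
lemma zero_estimate_aux {t : ℕ} (ht : 0 < t) (c : Fin t → ℕ) (hc : Function.Injective c)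
    (β : ℂ) (hβ : β ≠ 0) (p : Fin t → ℂ[X]) (hp : ∀ i, p i ≠ 0) (K : ℕ)
    (hK : ∀ i, (p i).natDegree ≤ K) (S M : ℕ) (y : ℕ → ℂ) (hy : ∀ m, y m ≠ 0)
    (h : ∀ m < M, ∀ s < S,
      ∑ i, ((twist ((c i : ℂ) * β))^[s] (p i)).eval (m : ℂ) * y m ^ c i = 0) :
    M * (S + 1 - t) ≤ t * K := by
  set D := (Matrix.of fun (s i : Fin t) => (twist ((c i : ℂ) * β))^[(s : ℕ)] (p i)).det with hD
  have hD0 : D ≠ 0 := det_twist_ne_zero c hc β hβ p hp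
  have hdeg : D.natDegree ≤ t * K := by
    rw [hD, Matrix.det_apply]
    refine natDegree_sum_le_of_forall_le _ _ fun σ _ => ?_
    refine (natDegree_smul_le _ _).trans ((natDegree_prod_le _ _).trans ?_)
    calc _ ≤ ∑ i : Fin t, K := Finset.sum_le_sum fun i _ =>
          (natDegree_twist_iterate_le _ _ _).trans (hK i)
      _ = t * K := by simp
  have hprod : ∏ m ∈ Finset.range M, (X - C (m : ℂ)) ^ (S + 1 - t) ∣ D := by
    apply Finset.prod_dvd_of_coprime
    · intro a _ b _ hab
      apply IsCoprime.pow
      apply isCoprime_X_sub_C_of_isUnit_sub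
      exact (sub_ne_zero.2 (by exact_mod_cast hab)).isUnit
    · intro m hm
      exact dvd_det_of_vanishing ht c β p S m (y m) (hy m) (h m (Finset.mem_range.1 hm))
  have := natDegree_le_of_dvd hprod hD0
  rw [natDegree_prod_of_monic _ _ fun m _ => (monic_X_sub_C _).pow _] at this
  simp only [natDegree_pow, natDegree_X_sub_C, mul_one, Finset.sum_const, Finset.card_range,
    smul_eq_mul] at this
  exact this.trans hdeg

/-- Zero estimate: an exponential polynomial `∑ p_j(z) exp(j β z)` with at most `J` terms and
coefficients of degree at most `K` cannot vanish to order `S` at all of `0, …, M - 1` when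
`J K < M (S + 1 - J)`. The value of `exp(β z)` at `m` may be replaced by any nonzero `y m`: the
statement is purely algebraic, so that `β` may be a root of `P` while `y m = 2 ^ m`. -/
lemma zero_estimate (J K S M : ℕ) (β : ℂ) (hβ : β ≠ 0) (p : Fin J → ℂ[X])
    (hp : ∃ j, p j ≠ 0) (hK : ∀ j, (p j).natDegree ≤ K) (y : ℕ → ℂ) (hy : ∀ m, y m ≠ 0)
    (hcount : J * K < M * (S + 1 - J)) :
    ∃ m < M, ∃ s < S,
      ∑ j : Fin J, ((twist (((j : ℕ) : ℂ) * β))^[s] (p j)).eval (m : ℂ) * y m ^ (j : ℕ) ≠ 0 := by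
  classical
  by_contra! hcon
  set T := Finset.univ.filter fun j : Fin J => p j ≠ 0 with hT
  have hTJ : T.card ≤ J := by simpa using Finset.card_le_univ T
  let e := T.equivFin.symm
  have := zero_estimate_aux (t := T.card)
    (Finset.card_pos.2 (by obtain ⟨j, hj⟩ := hp; exact ⟨j, by simp [hT, hj]⟩))
    (fun i => ((e i : Fin J) : ℕ))
    (fun a b hab => e.injective (Subtype.ext (Fin.ext hab))) β hβ
    (fun i => p (e i)) (fun i => (Finset.mem_filter.1 (e i).2).2) K (fun i => hK _) S M y hy
    (by
      intro m hm s hs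
      rw [← hcon m hm s hs]
      rw [e.sum_comp (fun a : T => ((twist ((((a : Fin J) : ℕ) : ℂ) * β))^[s] (p a)).eval (m : ℂ)
        * y m ^ ((a : Fin J) : ℕ))]
      rw [Finset.sum_coe_sort T (fun a : Fin J =>
        ((twist (((a : ℕ) : ℂ) * β))^[s] (p a)).eval (m : ℂ) * y m ^ (a : ℕ))]
      refine Finset.sum_subset (Finset.subset_univ _) fun j _ hj => ?_
      have hj0 : p j = 0 := by simpa [hT] using hj
      rw [twist_iterate_eq_sum, hj0]
      simp)
  have h1 : T.card * K ≤ J * K := Nat.mul_le_mul_right _ hTJ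
  have h2 : M * (S + 1 - J) ≤ M * (S + 1 - T.card) := Nat.mul_le_mul_left _ (by omega)
  omega

/-! ### Feldman's polynomials -/

/-- The binomial polynomial `X (X - 1) ⋯ (X - i + 1) / i!`. -/
noncomputable def binPoly (i : ℕ) : ℚ[X] := C ((i.factorial : ℚ)⁻¹) * descPochhammer ℚ i

lemma natDegree_binPoly (i : ℕ) : (binPoly i).natDegree = i := by
  rw [binPoly, natDegree_C_mul (by positivity), descPochhammer_natDegree]

lemma binPoly_ne_zero (i : ℕ) : binPoly i ≠ 0 :=
  mul_ne_zero (by simp [Nat.factorial_ne_zero]) (monic_descPochhammer ℚ i).ne_zero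

lemma binPoly_succ_eq_prod (i : ℕ) :
    binPoly (i + 1) = C ((i + 1 : ℚ)⁻¹) * X * ∏ l ∈ Finset.range i, (C ((l + 1 : ℚ)⁻¹) * X - 1) := by
  induction i with
  | zero => simp [binPoly]
  | succ i ih =>
    have h1 : binPoly (i + 1 + 1) = C ((i + 1 + 1 : ℚ)⁻¹) * binPoly (i + 1) * (X - C (i + 1 : ℚ)) := by
      rw [binPoly, binPoly, descPochhammer_succ_right, Nat.factorial_succ (i + 1)]
      push_cast
      rw [mul_inv, C_mul]
      simp only [map_add, map_natCast, map_one]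
      ring
    have h2 : (X - C (i + 1 : ℚ)) = C (i + 1 : ℚ) * (C ((i + 1 : ℚ)⁻¹) * X - 1) := by
      rw [mul_sub, ← mul_assoc, ← C_mul, mul_inv_cancel₀ (by positivity)]
      simp
    have h3 : C ((i + 1 : ℚ)⁻¹) * C (i + 1 : ℚ) = 1 := by
      rw [← C_mul, inv_mul_cancel₀ (by positivity), C_1]
    rw [h1, h2, ih, Finset.prod_range_succ]
    push_cast
    linear_combination (C ((i + 1 + 1 : ℚ)⁻¹) * X * (∏ l ∈ Finset.range i, (C ((l + 1 : ℚ)⁻¹) * X - 1))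
      * (C ((i + 1 : ℚ)⁻¹) * X - 1)) * h3

/-- If `ν` is divisible by `1, …, b` and `i ≤ b`, then `binom(m + ν X, i)` has integer
coefficients. For `m = 0` it is a product of factors with integer coefficients, since `ν / l` is an
integer for `1 ≤ l ≤ i`; the general case follows by induction on `m` from Pascal's rule. -/
lemma binPoly_comp_mem (b ν : ℕ) (hν : ∀ l, 1 ≤ l → l ≤ b → l ∣ ν) (m : ℕ) (i : ℕ) (hi : i ≤ b) :
    (binPoly i).comp (C (ν : ℚ) * X + C (m : ℚ)) ∈ (mapRingHom (Int.castRingHom ℚ)).range := by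
  induction m generalizing i with
  | zero =>
    have hdiv : ∀ l, 1 ≤ l → l ≤ b →
        C ((l : ℚ)⁻¹) * (C (ν : ℚ) * X) ∈ (mapRingHom (Int.castRingHom ℚ)).range := by
      intro l hl hlb
      obtain ⟨c, rfl⟩ := hν l hl hlb
      refine ⟨C (c : ℤ) * X, ?_⟩
      have : (l : ℚ) ≠ 0 := by positivity
      rw [← mul_assoc, ← C_mul]
      push_cast
      rw [inv_mul_cancel_left₀ this]
      simp
    cases i with
    | zero => simp [binPoly]
    | succ i =>
      rw [binPoly_succ_eq_prod, mul_comp, prod_comp]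
      refine mul_mem ?_ (prod_mem fun l hl => ?_)
      · have := hdiv (i + 1) (by omega) hi
        simpa using this
      · have := hdiv (l + 1) (by omega) (by have := Finset.mem_range.1 hl; omega)
        simpa using sub_mem this (one_mem _)
  | succ m ih =>
    cases i with
    | zero => simp [binPoly]
    | succ i =>
      have h1 : binPoly (i + 1) = (binPoly (i + 1)).comp (X - 1) + (binPoly i).comp (X - 1) := by
        simp only [binPoly, mul_comp, C_comp]
        rw [descPochhammer_succ_comp_X_sub_one, Nat.factorial_succ]
        have h3 : C ((i + 1 : ℚ)⁻¹) * ((i : ℚ[X]) + 1) = 1 := by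
          have : ((i : ℚ[X]) + 1) = C (i + 1 : ℚ) := by simp
          rw [this, ← C_mul, inv_mul_cancel₀ (by positivity), C_1]
        push_cast
        rw [mul_inv, C_mul, smul_eq_mul]
        linear_combination (C ((i.factorial : ℚ)⁻¹) * (descPochhammer ℚ i).comp (X - 1)) * h3
      have h2 : (X - 1 : ℚ[X]).comp (C (ν : ℚ) * X + C ((m + 1 : ℕ) : ℚ)) =
          C (ν : ℚ) * X + C (m : ℚ) := by
        simp
        ring
      rw [h1, add_comp, comp_assoc, comp_assoc, h2]
      exact add_mem (ih _ hi) (ih _ (by omega))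

lemma derivative_iterate_comp_linear (p : ℚ[X]) (c m : ℚ) (i : ℕ) :
    derivative^[i] (p.comp (C c * X + C m)) =
      C (c ^ i) * (derivative^[i] p).comp (C c * X + C m) := by
  induction i with
  | zero => simp
  | succ i ih =>
    rw [Function.iterate_succ_apply', ih, derivative_C_mul, derivative_comp,
      Function.iterate_succ_apply']
    simp only [derivative_add, derivative_C_mul, derivative_X, derivative_C, mul_one, add_zero,
      pow_succ, C_mul]
    ring

lemma exists_int_iterate_derivative (p : ℚ[X]) (ν m : ℕ)
    (hp : p.comp (C (ν : ℚ) * X + C (m : ℚ)) ∈ (mapRingHom (Int.castRingHom ℚ)).range) (i : ℕ) :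
    ∃ z : ℤ, (z : ℚ) = (ν : ℚ) ^ i * (derivative^[i] p).eval (m : ℚ) := by
  obtain ⟨u, hu⟩ := hp
  have h1 := congrArg (fun q => eval 0 (derivative^[i] q)) hu
  simp only [derivative_iterate_comp_linear] at h1
  refine ⟨(derivative^[i] u).eval 0, ?_⟩
  simp only [coe_mapRingHom, iterate_derivative_map, eval_mul, eval_C, eval_comp, eval_add, eval_X,
    mul_zero, zero_add] at h1
  rw [← h1, ← map_zero (Int.castRingHom ℚ), eval_map_apply]
  rfl

/-- Feldman's polynomial `binom(X, b) ^ q * binom(X, r)`, of degree `q b + r`. For `r < b` these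
polynomials have distinct degrees, hence are linearly independent. -/
noncomputable def feldman (b q r : ℕ) : ℚ[X] := binPoly b ^ q * binPoly r

lemma natDegree_feldman (b q r : ℕ) : (feldman b q r).natDegree = q * b + r := by
  rw [feldman, natDegree_mul (pow_ne_zero _ (binPoly_ne_zero _)) (binPoly_ne_zero _), natDegree_pow,
    natDegree_binPoly, natDegree_binPoly]

lemma feldman_ne_zero (b q r : ℕ) : feldman b q r ≠ 0 :=
  mul_ne_zero (pow_ne_zero _ (binPoly_ne_zero _)) (binPoly_ne_zero _)

lemma feldman_int (b ν : ℕ) (hν : ∀ l, 1 ≤ l → l ≤ b → l ∣ ν) (q r : ℕ) (hr : r ≤ b) (m i : ℕ) :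
    ∃ z : ℤ, (z : ℚ) = (ν : ℚ) ^ i * (derivative^[i] (feldman b q r)).eval (m : ℚ) := by
  apply exists_int_iterate_derivative
  rw [feldman, mul_comp, pow_comp]
  exact mul_mem (pow_mem (binPoly_comp_mem b ν hν m b le_rfl) _) (binPoly_comp_mem b ν hν m r hr)

/-- For `x ∈ [0, M]` every factor `X + (x - l)`, `l < i ≤ M`, has weighted length at most `M + ρ`. -/
lemma wnorm_taylor_descPochhammer_le (ρ x : ℝ) (hρ : 0 ≤ ρ) (M : ℕ) (hx0 : 0 ≤ x) (hxM : x ≤ M)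
    (i : ℕ) (hi : i ≤ M) : wnorm ρ (taylor x (descPochhammer ℝ i)) ≤ (M + ρ) ^ i := by
  induction i with
  | zero => simp [wnorm_C, ← C_1, -map_one]
  | succ i ih =>
    rw [descPochhammer_succ_right, taylor_mul, pow_succ]
    refine (wnorm_mul_le hρ _ _).trans (mul_le_mul (ih (by omega)) ?_ (wnorm_nonneg hρ _)
      (by positivity))
    have h1 : taylor x (X - (i : ℝ[X])) = monomial 1 1 + C (x - i) := by
      rw [map_sub, taylor_X, ← C_eq_natCast, taylor_C, monomial_one_one_eq_X, C_sub]
      ring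
    rw [h1]
    refine (wnorm_add_le hρ _ _).trans ?_
    rw [wnorm_monomial, wnorm_C]
    have : |x - i| ≤ M := by
      have : (i : ℝ) ≤ M := by exact_mod_cast (by omega : i ≤ M)
      rw [abs_le]; constructor <;> linarith [(Nat.cast_nonneg i : (0:ℝ) ≤ i)]
    simp
    linarith

lemma wnorm_taylor_binPoly_le (ρ x : ℝ) (hρ : 0 ≤ ρ) (M b : ℕ) (hb : 0 < b) (hbM : b ≤ M)
    (hx0 : 0 ≤ x) (hxM : x ≤ M) (i : ℕ) (hi : i ≤ b) :
    wnorm ρ (taylor x ((binPoly i).map (algebraMap ℚ ℝ))) ≤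
      (Real.exp 1 * ((M + ρ) / b)) ^ b := by
  rw [binPoly, Polynomial.map_mul, descPochhammer_map, map_C, taylor_mul, taylor_C]
  refine (wnorm_mul_le hρ _ _).trans ?_
  rw [wnorm_C]
  have h1 := wnorm_taylor_descPochhammer_le ρ x hρ M hx0 hxM i (hi.trans hbM)
  have hb' : (0 : ℝ) < b := by exact_mod_cast hb
  have hbM' : (b : ℝ) ≤ M := by exact_mod_cast hbM
  have h2 : (1 : ℝ) ≤ (M + ρ) / b := by rw [le_div_iff₀ hb']; linarith
  calc _ ≤ (i.factorial : ℝ)⁻¹ * (M + ρ) ^ i := by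
        refine mul_le_mul (le_of_eq ?_) h1 (wnorm_nonneg hρ _) (by positivity)
        simp
    _ = (b : ℝ) ^ i / i.factorial * ((M + ρ) / b) ^ i := by
        rw [div_pow]
        field_simp
    _ ≤ Real.exp b * ((M + ρ) / b) ^ b := by
        refine mul_le_mul (Real.pow_div_factorial_le_exp _ hb'.le i) (pow_le_pow_right₀ h2 hi)
          (by positivity) (by positivity)
    _ = _ := by rw [mul_pow, ← Real.exp_nat_mul, mul_one]

lemma wnorm_taylor_feldman_le (ρ x : ℝ) (hρ : 0 ≤ ρ) (M b : ℕ) (hb : 0 < b) (hbM : b ≤ M)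
    (hx0 : 0 ≤ x) (hxM : x ≤ M) (Q q r : ℕ) (hq : q < Q) (hr : r ≤ b) :
    wnorm ρ (taylor x ((feldman b q r).map (algebraMap ℚ ℝ))) ≤
      (Real.exp 1 * ((M + ρ) / b)) ^ (Q * b) := by
  have hb' : (0 : ℝ) < b := by exact_mod_cast hb
  have hbM' : (b : ℝ) ≤ M := by exact_mod_cast hbM
  have h2 : (1 : ℝ) ≤ (M + ρ) / b := by rw [le_div_iff₀ hb']; linarith
  have h3 : (1 : ℝ) ≤ (Real.exp 1 * ((M + ρ) / b)) ^ b :=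
    one_le_pow₀ (by nlinarith [Real.add_one_le_exp (1 : ℝ)])
  rw [feldman, Polynomial.map_mul, Polynomial.map_pow, taylor_mul, taylor_pow]
  refine (wnorm_mul_le hρ _ _).trans ?_
  calc _ ≤ ((Real.exp 1 * ((M + ρ) / b)) ^ b) ^ q * (Real.exp 1 * ((M + ρ) / b)) ^ b := by
        refine mul_le_mul ((wnorm_pow_le hρ _ _).trans ?_)
          (wnorm_taylor_binPoly_le ρ x hρ M b hb hbM hx0 hxM r hr) (wnorm_nonneg hρ _)
          (by positivity)
        exact pow_le_pow_left₀ (wnorm_nonneg hρ _)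
          (wnorm_taylor_binPoly_le ρ x hρ M b hb hbM hx0 hxM b le_rfl) _
    _ = ((Real.exp 1 * ((M + ρ) / b)) ^ b) ^ (q + 1) := by rw [pow_succ]
    _ ≤ ((Real.exp 1 * ((M + ρ) / b)) ^ b) ^ Q := pow_le_pow_right₀ h3 hq
    _ = _ := by rw [← pow_mul, mul_comm b Q]

/-- Since `log lcm(1, …, b) = ψ(b)`, this is Chebyshev's upper bound for `ψ`. -/
lemma lcmUpto_le_exp (b : ℕ) (hb : 0 < b) : (Nat.lcmUpto b : ℝ) ≤ Real.exp (3 * b) := by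
  have hpos : (0 : ℝ) < Nat.lcmUpto b := by exact_mod_cast Nat.lcmUpto_pos b
  rw [← Real.log_le_iff_le_exp hpos, ← Chebyshev.psi_eq_log_lcmUpto]
  have hb' : (1 : ℝ) ≤ b := by exact_mod_cast hb
  refine (Chebyshev.psi_le hb').trans ?_
  have hu : 0 < √(b : ℝ) := Real.sqrt_pos.2 (by linarith)
  have hlog : Real.log b = 2 * Real.log √(b : ℝ) := by
    rw [Real.log_sqrt (by linarith)]; ring
  have h1 : Real.log √(b : ℝ) ≤ √(b : ℝ) * Real.exp (-1) := by
    have := Real.log_le_sub_one_of_pos (mul_pos hu (Real.exp_pos (-1)))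
    rw [Real.log_mul hu.ne' (Real.exp_pos _).ne', Real.log_exp] at this
    linarith
  have h2 : Real.exp (-1) ≤ 0.368 := by linarith [Real.exp_neg_one_lt_d9]
  have h3 : Real.log 4 ≤ 1.3864 := by
    rw [show (4 : ℝ) = 2 ^ 2 by norm_num, Real.log_pow]
    push_cast
    linarith [Real.log_two_lt_d9]
  have h4 : √(b : ℝ) * √(b : ℝ) = b := Real.mul_self_sqrt (by linarith)
  have h5 : √(b : ℝ) * Real.log √(b : ℝ) ≤ b * 0.368 := by
    calc _ ≤ √(b : ℝ) * (√(b : ℝ) * 0.368) := by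
          gcongr
          exact h1.trans (by gcongr)
      _ = _ := by rw [← mul_assoc, h4]
  rw [hlog]
  nlinarith

/-! ### Analytic estimates -/

/-- Taylor estimate. If `g` and its derivatives (`g l` is the `l`-th one) are small at `0` up to
order `N`, and the `N`-th derivative is small on `[0, M]`, then integrating `u` times bounds the
derivative of order `N - u` on `[0, M]`. -/
lemma abs_le_of_small_taylor (g : ℕ → ℝ → ℝ) (hg : ∀ l x, HasDerivAt (g l) (g (l + 1) x) x)
    (N : ℕ) (M E : ℝ) (hM : 0 < M)
    (h0 : ∀ l < N, |g l 0| * M ^ l ≤ E * l.factorial)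
    (hN : ∀ x, 0 ≤ x → x ≤ M → |g N x| * M ^ N ≤ E * N.factorial)
    (u : ℕ) (hu : u ≤ N) (x : ℝ) (hx0 : 0 ≤ x) (hxM : x ≤ M) :
    |g (N - u) x| ≤ ∑ n ∈ Finset.range (u + 1),
      E * (n + (N - u)).factorial / M ^ (n + (N - u)) * (x ^ n / n.factorial) := by
  induction u generalizing x with
  | zero =>
    have := hN x hx0 hxM
    simp
    rwa [le_div_iff₀ (by positivity)]
  | succ u ih =>
    set s := N - (u + 1) with hs
    have hs1 : N - u = s + 1 := by omega
    rw [hs1] at ih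
    let c : ℕ → ℝ := fun n => E * (n + s).factorial / M ^ (n + s)
    have hB : ∀ z : ℝ, HasDerivAt (fun z => ∑ n ∈ Finset.range (u + 1 + 1), c n * (z ^ n / n.factorial))
        (∑ n ∈ Finset.range (u + 1), c (n + 1) * (z ^ n / n.factorial)) z := by
      intro z
      have h1 : HasDerivAt (fun z => ∑ n ∈ Finset.range (u + 1 + 1), c n * (z ^ n / n.factorial))
          (∑ n ∈ Finset.range (u + 1 + 1), c n * ((n : ℝ) * z ^ (n - 1) / n.factorial)) z := by
        apply HasDerivAt.fun_sum
        intro n _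
        exact ((hasDerivAt_pow n z).div_const _).const_mul _
      convert h1 using 1
      rw [Finset.sum_range_succ' _ (u + 1)]
      simp only [Nat.cast_zero, zero_mul, zero_div, mul_zero, add_zero, Nat.add_sub_cancel]
      refine Finset.sum_congr rfl fun n _ => ?_
      congr 1
      rw [Nat.factorial_succ]
      push_cast
      field_simp
    have := image_norm_le_of_norm_deriv_right_le_deriv_boundary (f := g s) (a := 0) (b := M)
      (f' := g (s + 1))
      (fun x _ => (hg s x).continuousAt.continuousWithinAt) (fun x _ => (hg s x).hasDerivWithinAt)
      (B := fun z => ∑ n ∈ Finset.range (u + 1 + 1), c n * (z ^ n / n.factorial))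
      (B' := fun z => ∑ n ∈ Finset.range (u + 1), c (n + 1) * (z ^ n / n.factorial))
      (by
        simp only [Finset.sum_range_succ' _ (u + 1)]
        simp [c]
        rw [le_div_iff₀ (by positivity)]
        exact h0 s (by omega))
      hB
      (by
        intro z hz
        refine (ih (by omega) z hz.1 hz.2.le).trans (le_of_eq ?_)
        refine Finset.sum_congr rfl fun n _ => ?_
        simp only [c]
        rw [show n + (s + 1) = n + 1 + s by ring])
    exact this ⟨hx0, hxM⟩

/-- A simplified form of `abs_le_of_small_taylor`. -/
lemma abs_le_of_small_taylor' (g : ℕ → ℝ → ℝ) (hg : ∀ l x, HasDerivAt (g l) (g (l + 1) x) x)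
    (N : ℕ) (M E : ℝ) (hM : 0 < M) (hE : 0 ≤ E)
    (h0 : ∀ l < N, |g l 0| * M ^ l ≤ E * l.factorial)
    (hN : ∀ x, 0 ≤ x → x ≤ M → |g N x| * M ^ N ≤ E * N.factorial)
    (s : ℕ) (hs : s ≤ N) (x : ℝ) (hx0 : 0 ≤ x) (hxM : x ≤ M) :
    |g s x| ≤ E * (N + 1) * (N / M) ^ s := by
  have h1 := abs_le_of_small_taylor g hg N M E hM h0 hN (N - s) (by omega) x hx0 hxM
  rw [Nat.sub_sub_self hs] at h1
  have h2 : ∀ n ∈ Finset.range (N - s + 1),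
      E * (n + s).factorial / M ^ (n + s) * (x ^ n / n.factorial) ≤ E * (N / M) ^ s := by
    intro n hn
    have hnN : n + s ≤ N := by have := Finset.mem_range.1 hn; omega
    have hf : ((n + s).factorial : ℝ) ≤ n.factorial * N ^ s := by
      have h := Nat.factorial_mul_descFactorial (Nat.le_add_left s n)
      rw [Nat.add_sub_cancel] at h
      have h' : (n + s).factorial ≤ n.factorial * N ^ s := by
        rw [← h]
        exact Nat.mul_le_mul_left _
          ((Nat.descFactorial_le_pow _ _).trans (Nat.pow_le_pow_left hnN _))
      exact_mod_cast h'
    have hx : x ^ n ≤ M ^ n := pow_le_pow_left₀ hx0 hxM _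
    calc _ = E * (((n + s).factorial * x ^ n) / (M ^ (n + s) * n.factorial)) := by
          field_simp
      _ ≤ E * (((n.factorial * N ^ s) * M ^ n) / (M ^ (n + s) * n.factorial)) := by
          gcongr
      _ = _ := by
          rw [pow_add, div_pow]
          field_simp
  refine h1.trans ((Finset.sum_le_sum h2).trans ?_)
  rw [Finset.sum_const, Finset.card_range, nsmul_eq_mul]
  have : ((N - s + 1 : ℕ) : ℝ) ≤ N + 1 := by exact_mod_cast (by omega : N - s + 1 ≤ N + 1)
  calc _ ≤ (N + 1 : ℝ) * (E * (N / M) ^ s) := by gcongr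
    _ = _ := by ring

lemma hasDerivAt_mul_exp (p : ℝ[X]) (c x : ℝ) :
    HasDerivAt (fun z => p.eval z * Real.exp (c * z)) ((twist c p).eval x * Real.exp (c * x)) x := by
  have h1 := p.hasDerivAt x
  have h2 : HasDerivAt (fun z => Real.exp (c * z)) (Real.exp (c * x) * (c * 1)) x :=
    ((hasDerivAt_id x).const_mul c).exp
  have h3 := h1.mul h2
  have h4 : (twist c p).eval x * Real.exp (c * x) =
      (derivative p).eval x * Real.exp (c * x) + p.eval x * (Real.exp (c * x) * (c * 1)) := by
    rw [twist, eval_add, eval_mul, eval_C]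
    ring
  rw [h4]
  exact h3

lemma factorial_mul_taylor_coeff (p : ℝ[X]) (x : ℝ) (i : ℕ) :
    (i.factorial : ℝ) * (taylor x p).coeff i = (derivative^[i] p).eval x := by
  rw [taylor_coeff, ← factorial_smul_hasseDeriv]
  simp

lemma sum_range_le_wnorm (ρ : ℝ) (hρ : 0 ≤ ρ) (p : ℝ[X]) (s : ℕ) :
    ∑ i ∈ Finset.range s, |p.coeff i| * ρ ^ i ≤ wnorm ρ p := by
  rw [wnorm_eq_sum_range ρ p (max s (p.natDegree + 1)) (by omega)]
  exact Finset.sum_le_sum_of_subset_of_nonneg (Finset.range_subset_range.2 (le_max_left _ _))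
    fun i _ _ => by positivity

/-- A Cauchy-type inequality: `(twist c)^[s] p` at `x`, divided by `s!`, is the `s`-th Taylor
coefficient of `p(x + z) exp(c z)`, whose weighted length is at most `exp(c ρ)` times that of
`p(x + z)`. -/
lemma abs_twist_eval_le (p : ℝ[X]) (c x ρ : ℝ) (hc : 0 ≤ c) (hρ : 0 ≤ ρ) (s : ℕ) :
    |((twist c)^[s] p).eval x| * ρ ^ s ≤
      s.factorial * (Real.exp (c * ρ) * wnorm ρ (taylor x p)) := by
  rw [twist_iterate_eq_sum, eval_finsetSum]
  calc _ ≤ (∑ i ∈ Finset.range (s + 1), (s.factorial * ((c ^ (s - i) / (s - i).factorial) *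
          |(taylor x p).coeff i|))) * ρ ^ s := by
        refine mul_le_mul_of_nonneg_right ?_ (by positivity)
        refine (Finset.abs_sum_le_sum_abs _ _).trans (Finset.sum_le_sum fun i hi => le_of_eq ?_)
        have his : i ≤ s := by have := Finset.mem_range.1 hi; omega
        rw [eval_mul, eval_C, ← factorial_mul_taylor_coeff, abs_mul, abs_mul, abs_mul, abs_pow,
          abs_of_nonneg hc, Nat.abs_cast, Nat.abs_cast, Nat.cast_choose ℝ his]
        field_simp
    _ = s.factorial * ∑ i ∈ Finset.range (s + 1), ((c * ρ) ^ (s - i) / (s - i).factorial) *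
          (|(taylor x p).coeff i| * ρ ^ i) := by
        rw [← Finset.mul_sum, mul_assoc, Finset.sum_mul]
        congr 1
        refine Finset.sum_congr rfl fun i hi => ?_
        have his : i ≤ s := by have := Finset.mem_range.1 hi; omega
        have : ρ ^ s = ρ ^ (s - i) * ρ ^ i := by rw [← pow_add, Nat.sub_add_cancel his]
        rw [this, mul_pow]
        ring
    _ ≤ s.factorial * ∑ i ∈ Finset.range (s + 1), Real.exp (c * ρ) *
          (|(taylor x p).coeff i| * ρ ^ i) := by
        gcongr with i hi
        exact Real.pow_div_factorial_le_exp _ (by positivity) _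
    _ ≤ _ := by
        rw [← Finset.mul_sum]
        gcongr
        exact sum_range_le_wnorm ρ hρ _ _

/-- Bound for the sum of the absolute values of the terms in the Leibniz expansion of
`(twist (j θ))^[s] p` at `x`, regarded as a polynomial in `θ`; it bounds the length of `auxPoly`. -/
lemma sum_choose_derivative_le (p : ℝ[X]) (x : ℝ) (ρ : ℝ) (j J s : ℕ) (hj : j ≤ J)
    (hJ : 0 < J) (hsρ : (s : ℝ) ≤ J * ρ) :
    ∑ i ∈ Finset.range (s + 1), (s.choose i : ℝ) * j ^ (s - i) * |(derivative^[i] p).eval x| ≤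
      J ^ s * wnorm ρ (taylor x p) := by
  have hJ' : (0 : ℝ) < J := by exact_mod_cast hJ
  have hρ : 0 ≤ ρ := by
    by_contra h
    push Not at h
    nlinarith [(Nat.cast_nonneg s : (0 : ℝ) ≤ s)]
  calc _ ≤ ∑ i ∈ Finset.range (s + 1), (J : ℝ) ^ s * (|(taylor x p).coeff i| * ρ ^ i) := by
        refine Finset.sum_le_sum fun i hi => ?_
        have his : i ≤ s := by have := Finset.mem_range.1 hi; omega
        rw [← factorial_mul_taylor_coeff, abs_mul, Nat.abs_cast]
        have h1 : (s.choose i : ℝ) * i.factorial ≤ s ^ i := by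
          have h := Nat.descFactorial_le_pow s i
          rw [Nat.descFactorial_eq_factorial_mul_choose] at h
          rw [mul_comm]
          exact_mod_cast h
        have h2 : (j : ℝ) ^ (s - i) ≤ J ^ (s - i) := by gcongr
        have h3 : (J : ℝ) ^ s = J ^ (s - i) * J ^ i := by rw [← pow_add, Nat.sub_add_cancel his]
        calc _ = ((s.choose i : ℝ) * i.factorial) * j ^ (s - i) * |(taylor x p).coeff i| := by ring
          _ ≤ (J * ρ) ^ i * J ^ (s - i) * |(taylor x p).coeff i| := by
              gcongr
              exact h1.trans (by gcongr)
          _ = _ := by rw [h3, mul_pow]; ring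
    _ ≤ _ := by
        rw [← Finset.mul_sum]
        gcongr
        exact sum_range_le_wnorm ρ hρ _ _

/-! ### The pigeonhole principle -/

/-- Two points of `[0, T]` in the same unit box are within `1` of each other; the minimum puts the
endpoint `T` into the last box. -/
lemma abs_sub_le_one_of_min_floor_eq (T : ℕ) (hT : 0 < T) (u v : ℝ) (hu0 : 0 ≤ u) (huT : u ≤ T)
    (hv0 : 0 ≤ v) (hvT : v ≤ T) (h : min (T - 1) ⌊u⌋₊ = min (T - 1) ⌊v⌋₊) : |u - v| ≤ 1 := by
  have hu1 := Nat.floor_le hu0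
  have hu2 := Nat.lt_floor_add_one u
  have hv1 := Nat.floor_le hv0
  have hv2 := Nat.lt_floor_add_one v
  rcases lt_or_ge ⌊u⌋₊ T with hu | hu <;> rcases lt_or_ge ⌊v⌋₊ T with hv | hv
  · have : ⌊u⌋₊ = ⌊v⌋₊ := by omega
    rw [this] at hu1 hu2
    rw [abs_le]; constructor <;> linarith
  · have : (⌊u⌋₊ : ℝ) + 1 = T := by exact_mod_cast (by omega : ⌊u⌋₊ + 1 = T)
    have : (T : ℝ) ≤ ⌊v⌋₊ := by exact_mod_cast hv
    rw [abs_le]; constructor <;> linarith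
  · have : (⌊v⌋₊ : ℝ) + 1 = T := by exact_mod_cast (by omega : ⌊v⌋₊ + 1 = T)
    have : (T : ℝ) ≤ ⌊u⌋₊ := by exact_mod_cast hu
    rw [abs_le]; constructor <;> linarith
  · have : (T : ℝ) ≤ ⌊v⌋₊ := by exact_mod_cast hv
    have : (T : ℝ) ≤ ⌊u⌋₊ := by exact_mod_cast hu
    rw [abs_le]; constructor <;> linarith

/-- Pigeonhole principle (Thue, Siegel) for real linear forms, with the `l`-th range divided into
`T l` boxes: if there are fewer boxes than integer vectors with coordinates in `[0, A]`, the
difference of two vectors in the same box makes all the forms small. -/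
lemma exists_small_forms {ι : Type*} [Fintype ι] (N A : ℕ) (hA : 0 < A)
    (c : Fin N → ι → ℝ) (B : Fin N → ℝ) (hB : ∀ l, 0 < B l) (hc : ∀ l i, |c l i| ≤ B l)
    (T : Fin N → ℕ) (hT : ∀ l, 0 < T l) (W : ℕ) (hW : Fintype.card ι = W) (hW0 : 0 < W)
    (hcard : ∏ l, T l < (A + 1) ^ W) :
    ∃ a : ι → ℤ, a ≠ 0 ∧ (∀ i, |a i| ≤ A) ∧
      ∀ l, |∑ i, (a i : ℝ) * c l i| * T l ≤ 2 * A * W * B l := by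
  classical
  let V : Fin N → ℝ := fun l => A * W * B l
  have hV : ∀ l, 0 < V l := fun l => by
    have := hB l
    simp only [V]
    positivity
  let form : (ι → Fin (A + 1)) → Fin N → ℝ := fun v l => ∑ i, ((v i : ℕ) : ℝ) * c l i
  have hform : ∀ v l, |form v l| ≤ V l := by
    intro v l
    refine (Finset.abs_sum_le_sum_abs _ _).trans ?_
    calc _ ≤ ∑ i : ι, (A : ℝ) * B l := by
          refine Finset.sum_le_sum fun i _ => ?_
          rw [abs_mul, Nat.abs_cast]
          have : ((v i : ℕ) : ℝ) ≤ A := by exact_mod_cast Nat.lt_succ_iff.1 (v i).2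
          exact mul_le_mul this (hc l i) (abs_nonneg _) (by positivity)
      _ = V l := by
          rw [Finset.sum_const, Finset.card_univ, hW, nsmul_eq_mul]
          simp only [V]; ring
  let u : (ι → Fin (A + 1)) → Fin N → ℝ := fun v l => (form v l + V l) / (2 * V l) * T l
  have hu : ∀ v l, 0 ≤ u v l ∧ u v l ≤ T l := by
    intro v l
    have h1 := abs_le.1 (hform v l)
    have h2 := hV l
    constructor
    · exact mul_nonneg (div_nonneg (by linarith) (by linarith)) (by positivity)
    · have : (form v l + V l) / (2 * V l) ≤ 1 := by
        rw [div_le_one (by linarith)]; linarith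
      exact mul_le_of_le_one_left (by positivity) this
  let f : (ι → Fin (A + 1)) → (l : Fin N) → Fin (T l) := fun v l =>
    ⟨min (T l - 1) ⌊u v l⌋₊, by have := hT l; omega⟩
  obtain ⟨v, w, hvw, hfvw⟩ := Fintype.exists_ne_map_eq_of_card_lt f (by
    rw [Fintype.card_pi, Fintype.card_fun, hW]
    simpa using hcard)
  refine ⟨fun i => (v i : ℤ) - (w i : ℤ), ?_, ?_, ?_⟩
  · intro h0
    apply hvw
    funext i
    have := congrFun h0 i
    simp only [Pi.zero_apply] at this
    ext
    omega
  · intro i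
    have h1 := (v i).2
    have h2 := (w i).2
    beta_reduce
    rw [abs_le]
    constructor <;> omega
  · intro l
    have h1 := congrArg Fin.val (congrFun hfvw l)
    have h2 := abs_sub_le_one_of_min_floor_eq (T l) (hT l) (u v l) (u w l) (hu v l).1 (hu v l).2
      (hu w l).1 (hu w l).2 h1
    have h3 : u v l - u w l = (∑ i, ((((v i : ℤ) - (w i : ℤ) : ℤ)) : ℝ) * c l i) * T l / (2 * V l) := by
      have : ∑ i, ((((v i : ℤ) - (w i : ℤ) : ℤ)) : ℝ) * c l i = form v l - form w l := by
        simp only [form, ← Finset.sum_sub_distrib]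
        refine Finset.sum_congr rfl fun i _ => ?_
        push_cast
        ring
      rw [this]
      simp only [u]
      ring
    rw [h3, abs_div, abs_of_pos (by have := hV l; linarith : 0 < 2 * V l),
      div_le_one (by have := hV l; linarith), abs_mul, Nat.abs_cast] at h2
    calc _ ≤ 2 * V l := h2
      _ = _ := by simp only [V]; ring

/-! ### The auxiliary polynomials -/

lemma twist_iterate_sum {F : Type*} [CommRing F] {ι : Type*} (t : Finset ι) (a : F) (c : ι → F)
    (f : ι → F[X]) (s : ℕ) :
    (twist a)^[s] (∑ i ∈ t, C (c i) * f i) = ∑ i ∈ t, C (c i) * (twist a)^[s] (f i) := by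
  induction s with
  | zero => simp
  | succ s ih =>
    rw [Function.iterate_succ_apply', ih, twist, derivative_sum, Finset.mul_sum,
      ← Finset.sum_add_distrib]
    refine Finset.sum_congr rfl fun i _ => ?_
    rw [Function.iterate_succ_apply', twist, derivative_C_mul]
    ring

lemma eq_zero_of_sum_natDegree_injective {F : Type*} [Field F] {κ : Type*} [Fintype κ]
    (f : κ → F[X]) (hf : ∀ k, f k ≠ 0) (hinj : Function.Injective fun k => (f k).natDegree)
    (c : κ → F) (h : ∑ k, C (c k) * f k = 0) : c = 0 := by
  classical
  by_contra hc
  obtain ⟨k1, hk1⟩ := Function.ne_iff.1 hc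
  obtain ⟨k0, hk0, hmax⟩ := Finset.exists_max_image (Finset.univ.filter fun k => c k ≠ 0)
    (fun k => (f k).natDegree) ⟨k1, by simpa using hk1⟩
  have h1 := congrArg (fun p => p.coeff (f k0).natDegree) h
  simp only [finsetSum_coeff, coeff_C_mul, coeff_zero] at h1
  rw [Finset.sum_eq_single k0] at h1
  · rcases mul_eq_zero.1 h1 with h2 | h2
    · exact (Finset.mem_filter.1 hk0).2 h2
    · exact hf k0 (leadingCoeff_eq_zero.1 h2)
  · intro k _ hk
    by_cases hck : c k = 0
    · simp [hck]
    · have h3 := hmax k (by simp [hck])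
      have h4 : (f k).natDegree ≠ (f k0).natDegree := fun h => hk (hinj h)
      rw [coeff_eq_zero_of_natDegree_lt (by omega), mul_zero]
  · simp

lemma eq_zero_of_sum_pow_root (P : ℤ[X]) (hP : Irreducible P) (d : ℕ) (hd : P.natDegree = d)
    (hd0 : 0 < d) (β : ℂ) (hβ : aeval β P = 0) (c : Fin d → ℤ)
    (h : ∑ t, (c t : ℂ) * β ^ (t : ℕ) = 0) : c = 0 := by
  have hinjQ : Function.Injective (Int.castRingHom ℚ) := Int.cast_injective
  have hirr : Irreducible (P.map (Int.castRingHom ℚ)) :=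
    (IsPrimitive.Int.irreducible_iff_irreducible_map_cast (hP.isPrimitive (by omega))).1 hP
  let q : ℚ[X] := ∑ t : Fin d, monomial (t : ℕ) (c t : ℚ)
  have hq : aeval β q = 0 := by
    simp only [q, map_sum, aeval_monomial]
    simpa using h
  have hcoeff : ∀ t : Fin d, q.coeff t = c t := by
    intro t
    simp only [q, finsetSum_coeff, coeff_monomial]
    rw [Finset.sum_eq_single t] <;> simp +contextual [Fin.ext_iff]
  have hdeg : q = 0 ∨ q.natDegree < d := by
    refine Or.inr (lt_of_le_of_lt (natDegree_sum_le_of_forall_le (n := d - 1) _ _ fun t _ => ?_)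
      (by omega))
    exact (natDegree_monomial_le _).trans (by have := t.2; omega)
  have hq0 : q = 0 := by
    by_contra hne
    have hcop : IsCoprime (P.map (Int.castRingHom ℚ)) q := by
      rw [hirr.coprime_iff_not_dvd]
      intro hdvd
      have h1 := natDegree_le_of_dvd hdvd hne
      rw [natDegree_map_eq_of_injective hinjQ] at h1
      rcases hdeg with h2 | h2
      · exact hne h2
      · omega
    obtain ⟨u, v, huv⟩ := hcop
    have h1 := congrArg (aeval β) huv
    have h2 : aeval β (P.map (Int.castRingHom ℚ)) = 0 := by
      have := aeval_map_algebraMap ℚ β P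
      rw [hβ] at this
      simpa using this
    simp [h2, hq] at h1
  funext t
  have := hcoeff t
  rw [hq0, coeff_zero] at this
  exact_mod_cast this.symm

/-- The integer polynomial whose value at `θ = log 2` is `ν ^ s` times the `s`-th derivative at `m`
of `∑ a_{t,k,j} θ^t φ_k(z) 2^{jz}`. The index `x = (t, k, j)` runs over `Fin d × κ × Fin J`, and
`e k i` is the integer `ν ^ i φ_k^{(i)}(m)`. -/
noncomputable def auxPoly {κ : Type*} [Fintype κ] {d J : ℕ} (a : Fin d × κ × Fin J → ℤ)
    (e : κ → ℕ → ℤ) (ν s m : ℕ) : ℤ[X] :=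
  ∑ x : Fin d × κ × Fin J, ∑ i ∈ Finset.range (s + 1), monomial ((x.1 : ℕ) + (s - i))
    (a x * (2 ^ m) ^ (x.2.2 : ℕ) * (s.choose i * (ν * (x.2.2 : ℕ)) ^ (s - i) * e x.2.1 i))

lemma natDegree_auxPoly_le {κ : Type*} [Fintype κ] {d J : ℕ} (a : Fin d × κ × Fin J → ℤ)
    (e : κ → ℕ → ℤ) (ν s m : ℕ) : (auxPoly a e ν s m).natDegree ≤ d + s := by
  refine natDegree_sum_le_of_forall_le _ _ fun x _ => natDegree_sum_le_of_forall_le _ _ fun i _ => ?_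
  exact (natDegree_monomial_le _).trans (by have := x.1.2; omega)

/-- The value of `auxPoly` at any `z`, so in particular at `log 2` and at a root of `P`. -/
lemma aeval_auxPoly {κ : Type*} [Fintype κ] {d J : ℕ} (a : Fin d × κ × Fin J → ℤ)
    (φ : κ → ℚ[X]) (e : κ → ℕ → ℤ) (ν s m : ℕ)
    (he : ∀ k i, (e k i : ℚ) = (ν : ℚ) ^ i * (derivative^[i] (φ k)).eval (m : ℚ))
    {F : Type*} [Field F] [CharZero F] (z : F) :
    aeval z (auxPoly a e ν s m) = (ν : F) ^ s * ∑ x : Fin d × κ × Fin J,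
      (a x : F) * z ^ (x.1 : ℕ) * (((twist (((x.2.2 : ℕ) : F) * z))^[s]
        ((φ x.2.1).map (algebraMap ℚ F))).eval (m : F) * (2 ^ m) ^ (x.2.2 : ℕ)) := by
  rw [auxPoly, map_sum, Finset.mul_sum]
  refine Finset.sum_congr rfl fun x _ => ?_
  rw [map_sum, twist_iterate_eq_sum, eval_finsetSum, Finset.sum_mul, Finset.mul_sum, Finset.mul_sum]
  refine Finset.sum_congr rfl fun i hi => ?_
  have his : i ≤ s := by have := Finset.mem_range.1 hi; omega
  have h1 : (e x.2.1 i : F) = (ν : F) ^ i *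
      (derivative^[i] ((φ x.2.1).map (algebraMap ℚ F))).eval (m : F) := by
    have h2 := congrArg (algebraMap ℚ F) (he x.2.1 i)
    rw [map_mul, map_pow, map_natCast, map_intCast] at h2
    rw [h2, iterate_derivative_map, ← map_natCast (algebraMap ℚ F) m, eval_map_apply]
  have h3 : (ν : F) ^ s = ν ^ (s - i) * ν ^ i := by rw [← pow_add, Nat.sub_add_cancel his]
  rw [aeval_monomial, eval_mul, eval_C, h3]
  simp only [algebraMap_int_eq, eq_intCast, Int.cast_mul, Int.cast_pow, Int.cast_natCast,
    Int.cast_ofNat, h1, mul_pow, pow_add]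
  ring

lemma wnorm_auxPoly_le {κ : Type*} [Fintype κ] {d J : ℕ} (a : Fin d × κ × Fin J → ℤ)
    (φ : κ → ℚ[X]) (e : κ → ℕ → ℤ) (ν s m S M A : ℕ)
    (he : ∀ k i, (e k i : ℚ) = (ν : ℚ) ^ i * (derivative^[i] (φ k)).eval (m : ℚ))
    (ha : ∀ x, |a x| ≤ A) (hs : s ≤ S) (hm : m ≤ M) (hν : 0 < ν) (hJ : 0 < J) (ρ Φ : ℝ)
    (hρ : (S : ℝ) ≤ J * ρ)
    (hΦ : ∀ k, wnorm ρ (taylor (m : ℝ) ((φ k).map (algebraMap ℚ ℝ))) ≤ Φ) :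
    wnorm 1 ((auxPoly a e ν s m).map (Int.castRingHom ℝ)) ≤
      Fintype.card (Fin d × κ × Fin J) * (A * 2 ^ (J * M) * ν ^ S * J ^ S * Φ) := by
  have hρ0 : 0 ≤ ρ := by
    have hJ' : (0 : ℝ) < J := by exact_mod_cast hJ
    by_contra h
    push Not at h
    nlinarith [(Nat.cast_nonneg S : (0 : ℝ) ≤ S)]
  have hν1 : (1 : ℝ) ≤ ν := by exact_mod_cast hν
  have hJ1 : (1 : ℝ) ≤ J := by exact_mod_cast hJ
  rw [auxPoly, Polynomial.map_sum]
  refine (wnorm_sum_le zero_le_one _ _).trans ?_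
  rw [← Finset.card_univ, ← nsmul_eq_mul]
  refine Finset.sum_le_card_nsmul _ _ _ fun x _ => ?_
  rw [Polynomial.map_sum]
  refine (wnorm_sum_le zero_le_one _ _).trans ?_
  have h1 := sum_choose_derivative_le ((φ x.2.1).map (algebraMap ℚ ℝ)) m ρ x.2.2 J s x.2.2.2.le hJ
    (le_trans (by exact_mod_cast hs) hρ)
  have hae : ∀ i, |(e x.2.1 i : ℝ)| = (ν : ℝ) ^ i *
      |(derivative^[i] ((φ x.2.1).map (algebraMap ℚ ℝ))).eval (m : ℝ)| := by
    intro i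
    have h2 := congrArg (algebraMap ℚ ℝ) (he x.2.1 i)
    rw [map_mul, map_pow, map_natCast, map_intCast] at h2
    rw [h2, iterate_derivative_map, ← map_natCast (algebraMap ℚ ℝ) m, eval_map_apply, abs_mul,
      abs_pow, Nat.abs_cast]
  have hax : |(a x : ℝ)| ≤ A := by exact_mod_cast ha x
  calc _ = |(a x : ℝ)| * (2 ^ m) ^ (x.2.2 : ℕ) * ν ^ s * ∑ i ∈ Finset.range (s + 1),
        (s.choose i : ℝ) * (x.2.2 : ℕ) ^ (s - i) *
          |(derivative^[i] ((φ x.2.1).map (algebraMap ℚ ℝ))).eval (m : ℝ)| := by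
        rw [Finset.mul_sum]
        refine Finset.sum_congr rfl fun i hi => ?_
        have his : i ≤ s := by have := Finset.mem_range.1 hi; omega
        have h3 : (ν : ℝ) ^ s = ν ^ (s - i) * ν ^ i := by rw [← pow_add, Nat.sub_add_cancel his]
        rw [map_monomial, wnorm_monomial, one_pow, mul_one, h3]
        simp only [eq_intCast, Int.cast_mul, Int.cast_pow, Int.cast_natCast, Int.cast_ofNat,
          abs_mul, abs_pow, Nat.abs_cast, hae, mul_pow]
        rw [abs_of_pos (by norm_num : (0 : ℝ) < 2)]
        ring
    _ ≤ A * 2 ^ (J * M) * ν ^ S * (J ^ S * Φ) := by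
        refine mul_le_mul ?_ (h1.trans ?_) (Finset.sum_nonneg fun i _ => by positivity)
          (by positivity)
        · gcongr
          · rw [← pow_mul]
            refine pow_le_pow_right₀ (by norm_num) ?_
            rw [mul_comm J M]
            exact Nat.mul_le_mul hm x.2.2.2.le
        · refine mul_le_mul (pow_le_pow_right₀ hJ1 hs) (hΦ _) (wnorm_nonneg hρ0 _) (by positivity)
    _ = _ := by ring

/-! ### The main estimate with free parameters -/

/-- The `l`-th derivative of `p(x) 2 ^ (j x)` on `[0, M]`, estimated by Cauchy's inequality on a disc
of radius `R M`. -/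
lemma abs_twist_mul_exp_le (p : ℝ[X]) (j J R M : ℕ) (hj : j ≤ J) (x : ℝ) (hx0 : 0 ≤ x)
    (hxM : x ≤ M) (Φ : ℝ) (hΦ : wnorm ((R : ℝ) * M) (taylor x p) ≤ Φ) (l : ℕ) :
    |((twist ((j : ℝ) * Real.log 2))^[l] p).eval x * Real.exp ((j : ℝ) * Real.log 2 * x)| *
      M ^ l * R ^ l ≤ l.factorial * (Φ * 2 ^ (J * (R + 1) * M)) := by
  have hθ : 0 ≤ Real.log 2 := Real.log_nonneg (by norm_num)
  have h1 := abs_twist_eval_le p ((j : ℝ) * Real.log 2) x ((R : ℝ) * M) (by positivity)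
    (by positivity) l
  have hw := wnorm_nonneg (by positivity : (0 : ℝ) ≤ (R : ℝ) * M) (taylor x p)
  rw [abs_mul, Real.abs_exp]
  have h2 : Real.exp ((j : ℝ) * Real.log 2 * (R * M)) * Real.exp ((j : ℝ) * Real.log 2 * x) ≤
      2 ^ (J * (R + 1) * M) := by
    rw [← Real.exp_add, ← Real.log_le_log_iff (Real.exp_pos _) (by positivity), Real.log_exp,
      Real.log_pow]
    push_cast
    have : (j : ℝ) * (R * M + x) ≤ J * ((R + 1) * M) := by
      have : (j : ℝ) ≤ J := by exact_mod_cast hj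
      gcongr
      linarith
    nlinarith
  calc _ = (|((twist ((j : ℝ) * Real.log 2))^[l] p).eval x| * (R * M) ^ l) *
        Real.exp ((j : ℝ) * Real.log 2 * x) := by rw [mul_pow]; ring
    _ ≤ (l.factorial * (Real.exp ((j : ℝ) * Real.log 2 * (R * M)) *
          wnorm ((R : ℝ) * M) (taylor x p))) * Real.exp ((j : ℝ) * Real.log 2 * x) := by gcongr
    _ = l.factorial * (wnorm ((R : ℝ) * M) (taylor x p) *
          (Real.exp ((j : ℝ) * Real.log 2 * (R * M)) * Real.exp ((j : ℝ) * Real.log 2 * x))) := by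
        ring
    _ ≤ _ := by gcongr; exact hw.trans hΦ

lemma prod_pow_sub (R N : ℕ) : ∏ l : Fin N, R ^ (N - (l : ℕ)) = R ^ (N * (N + 1) / 2) := by
  rw [Finset.prod_pow_eq_pow_sum]
  congr 1
  rw [Fin.sum_univ_eq_sum_range (fun l => N - l) N]
  have h1 : ∑ l ∈ Finset.range N, (N - l) = ∑ l ∈ Finset.range N, (l + 1) := by
    rw [← Finset.sum_range_reflect (fun l => l + 1) N]
    refine Finset.sum_congr rfl fun l hl => ?_
    have := Finset.mem_range.1 hl
    omega
  have h2 := Finset.sum_range_succ' (fun l => l) N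
  have h3 := Finset.sum_range_id (N + 1)
  rw [h1]
  simp only [Nat.add_sub_cancel] at h3
  rw [mul_comm N]
  omega

/-- The lower bound with free parameters. Here `hcount` feeds the zero estimate, `hbox` the
pigeonhole principle, and `hnum` says that the value `Q(log 2)` of the auxiliary polynomial is too
small for the second alternative of `liouville`, so that the first one must hold. -/
theorem core_lower_bound {κ : Type*} [Fintype κ] (P : ℤ[X]) (hP : Irreducible P) (d : ℕ)
    (hd : P.natDegree = d) (hd0 : 0 < d) (hP0 : P.coeff 0 ≠ 0)
    (φ : κ → ℚ[X]) (hφ0 : ∀ k, φ k ≠ 0) (hinj : Function.Injective fun k => (φ k).natDegree)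
    (K : ℕ) (hK : Fintype.card κ = K) (hdeg : ∀ k, (φ k).natDegree ≤ K)
    (J M R A S N W ν : ℕ) (hN : N = J * K) (hW : W = d * N) (hJ : 0 < J) (hM : 0 < M)
    (hR : 0 < R) (hA : 0 < A) (hν : 0 < ν) (hK0 : 0 < K)
    (hintegral : ∀ k (m i : ℕ), ∃ z : ℤ, (z : ℚ) = (ν : ℚ) ^ i * (derivative^[i] (φ k)).eval (m : ℚ))
    (Φ : ℝ) (hΦ1 : 1 ≤ Φ)
    (hΦ : ∀ k (x : ℝ), 0 ≤ x → x ≤ M →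
      wnorm ((R : ℝ) * M) (taylor x ((φ k).map (algebraMap ℚ ℝ))) ≤ Φ)
    (hSρ : S ≤ J * (R * M)) (hSN : S ≤ N) (hMN : M ≤ N)
    (hcount : J * K < M * (S + 1 - J))
    (hbox : R ^ (N * (N + 1) / 2) < (A + 1) ^ W)
    (LP LQ : ℝ) (hLP1 : 1 ≤ LP) (hLP : wnorm 1 (P.map (Int.castRingHom ℝ)) ≤ LP)
    (hLQ : LQ = W * (A * 2 ^ (J * M) * ν ^ S * J ^ S * Φ))
    (hnum : ν ^ S * (2 * A * W * (Φ * 2 ^ (J * (R + 1) * M)) / R ^ N * (N + 1) * (N / M) ^ S) *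
      ((2 * LP) ^ (d + S) * (2 * LQ) ^ d) < LQ) :
    LP ≤ |aeval (Real.log 2) P| * ((2 * LP) ^ (d + S) * (2 * LQ) ^ d) := by
  classical
  have hθ0 : 0 ≤ Real.log 2 := Real.log_nonneg (by norm_num)
  have hθ1 : Real.log 2 ≤ 1 := by linarith [Real.log_two_lt_d9]
  have hN0 : 0 < N := by rw [hN]; positivity
  have hW0 : 0 < W := by rw [hW]; positivity
  have hcardι : Fintype.card (Fin d × κ × Fin J) = W := by
    rw [Fintype.card_prod, Fintype.card_prod, hK, Fintype.card_fin, Fintype.card_fin, hW, hN]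
    ring
  set θ := Real.log 2 with hθ
  set G : ℝ := Φ * 2 ^ (J * (R + 1) * M) with hG
  have hG0 : 0 < G := by positivity
  have hM' : (0 : ℝ) < M := by exact_mod_cast hM
  have hR' : (0 : ℝ) < R := by exact_mod_cast hR
  -- the building blocks `x ↦ (twist^[l] φ_k)(x) * exp (j θ x)`
  let h : ℕ → Fin d × κ × Fin J → ℝ → ℝ := fun l x z =>
    ((twist (((x.2.2 : ℕ) : ℝ) * θ))^[l] ((φ x.2.1).map (algebraMap ℚ ℝ))).eval z *
      Real.exp (((x.2.2 : ℕ) : ℝ) * θ * z)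
  have hh : ∀ l x (z : ℝ), 0 ≤ z → z ≤ M → |h l x z| * M ^ l ≤ l.factorial * (G / R ^ l) := by
    intro l x z hz0 hzM
    have := abs_twist_mul_exp_le ((φ x.2.1).map (algebraMap ℚ ℝ)) x.2.2 J R M x.2.2.2.le z hz0 hzM Φ
      (hΦ _ z hz0 hzM) l
    rw [mul_div_assoc', le_div_iff₀ (by positivity)]
    exact this
  obtain ⟨a, ha0, haA, hasmall⟩ := exists_small_forms (ι := Fin d × κ × Fin J) N A hA
    (fun l x => θ ^ (x.1 : ℕ) * (h l x 0 * M ^ (l : ℕ) / (l : ℕ).factorial))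
    (fun l => G / R ^ (l : ℕ)) (fun l => by positivity)
    (by
      intro l x
      have h1 := hh l x 0 le_rfl hM'.le
      rw [abs_mul, abs_pow, abs_of_nonneg hθ0, abs_div, abs_mul, Nat.abs_cast, abs_pow, Nat.abs_cast]
      have h2 : θ ^ (x.1 : ℕ) ≤ 1 := pow_le_one₀ hθ0 hθ1
      calc _ ≤ 1 * (|h l x 0| * M ^ (l : ℕ) / (l : ℕ).factorial) := by gcongr
        _ ≤ _ := by
          rw [one_mul, div_le_iff₀ (by positivity)]
          linarith)
    (fun l => R ^ (N - (l : ℕ))) (fun l => by positivity) W hcardι hW0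
    (by rw [prod_pow_sub]; exact hbox)
  -- the auxiliary function and its derivatives
  let g : ℕ → ℝ → ℝ := fun l z => ∑ x, (a x : ℝ) * θ ^ (x.1 : ℕ) * h l x z
  have hg : ∀ l z, HasDerivAt (g l) (g (l + 1) z) z := by
    intro l z
    apply HasDerivAt.fun_sum
    intro x _
    have := hasDerivAt_mul_exp ((twist (((x.2.2 : ℕ) : ℝ) * θ))^[l] ((φ x.2.1).map (algebraMap ℚ ℝ)))
      (((x.2.2 : ℕ) : ℝ) * θ) z
    rw [← Function.iterate_succ_apply' (twist (((x.2.2 : ℕ) : ℝ) * θ))] at this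
    exact this.const_mul _
  set E : ℝ := 2 * A * W * G / R ^ N with hE
  have hE0 : 0 ≤ E := by positivity
  have hg0 : ∀ l < N, |g l 0| * M ^ l ≤ E * l.factorial := by
    intro l hl
    have h1 := hasmall ⟨l, hl⟩
    simp only at h1
    have h2 : ∑ x, (a x : ℝ) * (θ ^ (x.1 : ℕ) * (h l x 0 * M ^ l / l.factorial)) =
        g l 0 * M ^ l / l.factorial := by
      simp only [g, Finset.sum_mul, Finset.sum_div]
      refine Finset.sum_congr rfl fun x _ => by ring
    rw [h2, abs_div, abs_mul, abs_pow, Nat.abs_cast, Nat.abs_cast] at h1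
    push_cast at h1
    have h3 : (R : ℝ) ^ N = R ^ (N - l) * R ^ l := by rw [← pow_add, Nat.sub_add_cancel hl.le]
    rw [← div_le_iff₀ (by positivity), hE, h3, le_div_iff₀ (by positivity), ← mul_assoc]
    calc _ ≤ (2 * A * W * (G / R ^ l)) * R ^ l := by gcongr
      _ = _ := by field_simp
  have hgN : ∀ z : ℝ, 0 ≤ z → z ≤ M → |g N z| * M ^ N ≤ E * N.factorial := by
    intro z hz0 hzM
    have h1 : |g N z| * M ^ N ≤ ∑ x : Fin d × κ × Fin J, (A : ℝ) * (N.factorial * (G / R ^ N)) := by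
      refine (mul_le_mul_of_nonneg_right (Finset.abs_sum_le_sum_abs _ _) (by positivity)).trans ?_
      rw [Finset.sum_mul]
      refine Finset.sum_le_sum fun x _ => ?_
      rw [abs_mul, abs_mul, abs_pow, abs_of_nonneg hθ0, mul_assoc]
      have h2 : θ ^ (x.1 : ℕ) ≤ 1 := pow_le_one₀ hθ0 hθ1
      have h3 : |(a x : ℝ)| ≤ A := by exact_mod_cast haA x
      have h4 : |(a x : ℝ)| * θ ^ (x.1 : ℕ) ≤ A :=
        (mul_le_of_le_one_right (abs_nonneg _) h2).trans h3
      exact mul_le_mul h4 (hh N x z hz0 hzM) (by positivity) (by positivity)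
    rw [Finset.sum_const, Finset.card_univ, hcardι, nsmul_eq_mul] at h1
    have h5 : E * N.factorial = 2 * (W * ((A : ℝ) * (N.factorial * (G / R ^ N)))) := by
      rw [hE]; ring
    have h6 : 0 ≤ W * ((A : ℝ) * (N.factorial * (G / R ^ N))) := by positivity
    linarith
  -- a root of `P` and the point where the auxiliary polynomial does not vanish
  obtain ⟨β, hβ⟩ := IsAlgClosed.exists_aeval_eq_zero ℂ P
    (by
      have := natDegree_pos_iff_degree_pos.1 (by omega : 0 < P.natDegree)
      exact this.ne')
  have hβ0 : β ≠ 0 := by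
    rintro rfl
    rw [← coeff_zero_eq_aeval_zero'] at hβ
    exact hP0 (by simpa using hβ)
  choose e he using hintegral
  let p : Fin J → ℂ[X] := fun j => ∑ x : Fin d × κ,
    C ((a (x.1, x.2, j) : ℂ) * β ^ (x.1 : ℕ)) * (φ x.2).map (algebraMap ℚ ℂ)
  have hp : ∃ j, p j ≠ 0 := by
    by_contra! hcon
    apply ha0
    funext ⟨t, k, j⟩
    have h1 := hcon j
    simp only [p] at h1
    rw [Fintype.sum_prod_type_right] at h1
    simp only [← Finset.sum_mul, ← map_sum] at h1
    have h2 := eq_zero_of_sum_natDegree_injective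
      (fun k => (φ k).map (algebraMap ℚ ℂ))
      (fun k => (Polynomial.map_ne_zero_iff (algebraMap ℚ ℂ).injective).2 (hφ0 k))
      (by simpa only [natDegree_map] using hinj) _ h1
    have h3 := eq_zero_of_sum_pow_root P hP d hd hd0 β hβ (fun t => a (t, k, j)) (congrFun h2 k)
    exact congrFun h3 t
  obtain ⟨m, hm, s, hs, hne⟩ := zero_estimate J K S M β hβ0 p hp
    (by
      intro j
      refine natDegree_sum_le_of_forall_le _ _ fun x _ => ?_
      refine (natDegree_C_mul_le _ _).trans ?_
      rw [natDegree_map]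
      exact hdeg _)
    (fun m => 2 ^ m) (fun m => pow_ne_zero _ two_ne_zero) hcount
  have heval : ∀ k i, (e k m i : ℚ) = (ν : ℚ) ^ i * (derivative^[i] (φ k)).eval (m : ℚ) :=
    fun k i => he k m i
  have hQβ : aeval β (auxPoly a (fun k => e k m) ν s m) ≠ 0 := by
    rw [aeval_auxPoly a φ _ ν s m heval]
    refine mul_ne_zero (pow_ne_zero _ (by exact_mod_cast hν.ne')) ?_
    convert hne using 1
    simp only [p, twist_iterate_sum, eval_finsetSum, Finset.sum_mul, eval_mul, eval_C]
    rw [← (Equiv.prodAssoc (Fin d) κ (Fin J)).sum_comp, Fintype.sum_prod_type_right]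
    refine Finset.sum_congr rfl fun j _ => Finset.sum_congr rfl fun x _ => ?_
    simp [mul_assoc]
  have hQθ : |aeval θ (auxPoly a (fun k => e k m) ν s m)| ≤
      ν ^ S * (E * (N + 1) * (N / M) ^ S) := by
    rw [aeval_auxPoly a φ _ ν s m heval, abs_mul, abs_pow, Nat.abs_cast]
    have h1 : ∑ x : Fin d × κ × Fin J, (a x : ℝ) * θ ^ (x.1 : ℕ) *
        (((twist (((x.2.2 : ℕ) : ℝ) * θ))^[s] ((φ x.2.1).map (algebraMap ℚ ℝ))).eval (m : ℝ) *
          (2 ^ m) ^ (x.2.2 : ℕ)) = g s m := by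
      refine Finset.sum_congr rfl fun x _ => ?_
      simp only [h]
      congr 2
      rw [hθ, ← pow_mul, ← Real.exp_log (show (0 : ℝ) < 2 ^ (m * (x.2.2 : ℕ)) by positivity),
        Real.log_pow]
      congr 1
      push_cast
      ring
    rw [h1]
    have h2 := abs_le_of_small_taylor' g hg N M E hM' hE0 hg0 hgN s (hs.le.trans hSN) m
      (by positivity) (by exact_mod_cast hm.le)
    have h3 : (1 : ℝ) ≤ N / M := by
      rw [le_div_iff₀ hM', one_mul]; exact_mod_cast hMN
    have h4 : (1 : ℝ) ≤ ν := by exact_mod_cast hν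
    refine mul_le_mul (pow_le_pow_right₀ h4 hs.le) (h2.trans ?_) (abs_nonneg _) (by positivity)
    gcongr
  have hLQ1 : 1 ≤ LQ := by
    have hc : ∀ n : ℕ, 0 < n → (1 : ℝ) ≤ n := fun n hn => by exact_mod_cast hn
    rw [hLQ]
    have h2 : (1 : ℝ) ≤ 2 ^ (J * M) := one_le_pow₀ (by norm_num)
    have h3 : (1 : ℝ) ≤ ν ^ S := one_le_pow₀ (hc _ hν)
    have h4 : (1 : ℝ) ≤ J ^ S := one_le_pow₀ (hc _ hJ)
    exact one_le_mul_of_one_le_of_one_le (hc _ hW0) (one_le_mul_of_one_le_of_one_le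
      (one_le_mul_of_one_le_of_one_le (one_le_mul_of_one_le_of_one_le
      (one_le_mul_of_one_le_of_one_le (hc _ hA) h2) h3) h4) hΦ1)
  have hlen := wnorm_auxPoly_le a φ (fun k => e k m) ν s m S M A heval haA hs.le hm.le hν hJ
    ((R : ℝ) * M) Φ (by exact_mod_cast hSρ)
    (fun k => hΦ k m (by positivity) (by exact_mod_cast hm.le))
  rw [hcardι, ← hLQ] at hlen
  have := liouville P (auxPoly a (fun k => e k m) ν s m) hP (by omega) β hβ hQβ (d + S)
    ((natDegree_auxPoly_le _ _ _ _ _).trans (by omega)) LP LQ hLP1 hLQ1 hLP hlen θ hθ0 hθ1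
  rw [hd] at this
  rcases this with h1 | h1
  · exact h1
  · exfalso
    have h2 : |aeval θ (auxPoly a (fun k => e k m) ν s m)| * ((2 * LP) ^ (d + S) * (2 * LQ) ^ d) ≤
        ν ^ S * (E * (N + 1) * (N / M) ^ S) * ((2 * LP) ^ (d + S) * (2 * LQ) ^ d) := by
      gcongr
    linarith

/-! ### Numerical inequalities -/

/-- A numerical upper bound for `log x` from a comparison of `x ^ m` with `2 ^ n`. -/
lemma log_le_of_pow_le (x : ℝ) (hx : 0 < x) (m n : ℕ) (hm : 0 < m) (h : x ^ m ≤ 2 ^ n) :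
    Real.log x ≤ n / m * 0.69315 := by
  have h1 := Real.log_le_log (by positivity) h
  rw [Real.log_pow, Real.log_pow] at h1
  have hm' : (0 : ℝ) < m := by exact_mod_cast hm
  have h2 : (n : ℝ) * Real.log 2 ≤ n * 0.69315 :=
    mul_le_mul_of_nonneg_left (by linarith [Real.log_two_lt_d9]) (by positivity)
  rw [div_mul_eq_mul_div, le_div_iff₀ hm']
  linarith

/-- The numerical inequality behind the choice of parameters. With `J = 40 d`, `M = 70 d b`,
`R = 3 d`, `K = 70 d y b`, `S = J (y + 1)` and `N = J K`, all contributions to the logarithm of the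
left side of `hnum` in `core_lower_bound`, apart from the main terms of `R ^ N` and of `A`, sum to
less than `N ℓ / 2`. -/
lemma parameter_inequality (d b y ℓ lp : ℝ) (hd : 1 ≤ d) (hb : 1 ≤ b) (hy : 0 < y)
    (hℓ : ℓ = 1 + Real.log d) (h1 : 20 * d ≤ y * ℓ) (h2 : y * ℓ ≤ 21 * d)
    (hlp0 : 0 ≤ lp) (hlp : lp ≤ b * d * ℓ) :
    40 * d * (70 * d * b) * (3 * d + d) * Real.log 2 +
      d * (70 * d * y * b) * (1 + Real.log ((1 + 3 * d) * (70 * d))) +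
      d * (40 * d * (y + 1)) * (3 * b) + d * (40 * d * (y + 1)) * Real.log (40 * d) +
      40 * d * (y + 1) * Real.log y + (d + 40 * d * (y + 1)) * (Real.log 2 + lp) +
      d * Real.log (2 * (d * (40 * d * (70 * d * y * b)))) +
      Real.log (2 * (40 * d * (70 * d * y * b) + 1)) + Real.log (3 * d) / 2 <
    40 * d * (70 * d * y * b) * ℓ / 2 := by
  have hlogd : 0 ≤ Real.log d := Real.log_nonneg hd
  have hd0 : 0 < d := by linarith
  have hb0 : 0 < b := by linarith
  have hℓ1 : 1 ≤ ℓ := by linarith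
  have hℓd : ℓ ≤ d := by linarith [Real.log_le_sub_one_of_pos hd0]
  have hℓ0 : 0 < ℓ := by linarith
  have hy20 : 20 ≤ y := by
    by_contra hcon
    push Not at hcon
    nlinarith
  have hy21 : y ≤ 21 * d := by nlinarith
  have hθ : Real.log 2 ≤ 0.69315 := by linarith [Real.log_two_lt_d9]
  have hθ0 : 0 ≤ Real.log 2 := Real.log_nonneg (by norm_num)
  have l280 : Real.log 280 ≤ 5.7 :=
    (log_le_of_pow_le 280 (by norm_num) 5 41 (by norm_num) (by norm_num)).trans (by norm_num)
  have l40 : Real.log 40 ≤ 3.75 :=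
    (log_le_of_pow_le 40 (by norm_num) 3 16 (by norm_num) (by norm_num)).trans (by norm_num)
  have l21 : Real.log 21 ≤ 3.15 :=
    (log_le_of_pow_le 21 (by norm_num) 2 9 (by norm_num) (by norm_num)).trans (by norm_num)
  have l5600 : Real.log 5600 ≤ 9.1 :=
    (log_le_of_pow_le 5600 (by norm_num) 1 13 (by norm_num) (by norm_num)).trans (by norm_num)
  have l3 : Real.log 3 ≤ 1.11 :=
    (log_le_of_pow_le 3 (by norm_num) 5 8 (by norm_num) (by norm_num)).trans (by norm_num)
  -- everything is compared with the unit `U`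
  set U := d * d * b * (y * ℓ) with hU
  have hyℓ : 20 ≤ y * ℓ := by linarith only [h1, hd]
  have hdd : d ≤ d * d := le_mul_of_one_le_left hd0.le hd
  have hddb : d * d ≤ d * d * b := le_mul_of_one_le_right (by positivity) hb
  have e2 : 1 + Real.log ((1 + 3 * d) * (70 * d)) ≤ 6.7 * ℓ := by
    have : Real.log ((1 + 3 * d) * (70 * d)) ≤ Real.log (280 * d * d) :=
      Real.log_le_log (by positivity) (by nlinarith)
    rw [Real.log_mul (by positivity) hd0.ne', Real.log_mul (by norm_num) hd0.ne'] at this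
    linarith
  have e4 : Real.log (40 * d) ≤ 3.75 * ℓ := by
    rw [Real.log_mul (by norm_num) hd0.ne']; linarith
  have e5 : Real.log y ≤ 3.15 * ℓ := by
    have : Real.log y ≤ Real.log (21 * d) := Real.log_le_log hy hy21
    rw [Real.log_mul (by norm_num) hd0.ne'] at this
    linarith
  have elb : Real.log b ≤ b := by linarith [Real.log_le_sub_one_of_pos hb0]
  have hbℓ : b ≤ b * ℓ := le_mul_of_one_le_right hb0.le hℓ1
  have hbℓ' : ℓ ≤ b * ℓ := le_mul_of_one_le_left hℓ0.le hb
  have e7 : Real.log (2 * (d * (40 * d * (70 * d * y * b)))) ≤ 14 * (b * ℓ) := by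
    have : Real.log (2 * (d * (40 * d * (70 * d * y * b)))) =
        Real.log 5600 + 3 * Real.log d + Real.log b + Real.log y := by
      rw [show 2 * (d * (40 * d * (70 * d * y * b))) = 5600 * d ^ 3 * b * y by ring,
        Real.log_mul (by positivity) hy.ne', Real.log_mul (by positivity) hb0.ne',
        Real.log_mul (by positivity) (by positivity), Real.log_pow]
      norm_num
    rw [this]
    linarith
  have e8 : Real.log (2 * (40 * d * (70 * d * y * b) + 1)) ≤ 15 * (b * ℓ) := by
    have h3 : 1 ≤ d * d * y * b := by
      have h4 : 1 ≤ d * d := one_le_mul_of_one_le_of_one_le hd hd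
      have h5 : 1 ≤ d * d * y := one_le_mul_of_one_le_of_one_le h4 (by linarith only [hy20])
      exact one_le_mul_of_one_le_of_one_le h5 hb
    have : Real.log (2 * (40 * d * (70 * d * y * b) + 1)) ≤
        Real.log (2 * (2 * (d * (40 * d * (70 * d * y * b))))) := by
      refine Real.log_le_log (by positivity) ?_
      have h4 : d * d * y * b ≤ d * (d * d * y * b) := le_mul_of_one_le_left (by positivity) hd
      rw [show 2 * (40 * d * (70 * d * y * b) + 1) = 5600 * (d * d * y * b) + 2 by ring,
        show 2 * (2 * (d * (40 * d * (70 * d * y * b)))) = 11200 * (d * (d * d * y * b)) by ring]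
      linarith only [h3, h4]
    have h4 : Real.log (2 * (2 * (d * (40 * d * (70 * d * y * b))))) =
        Real.log 2 + Real.log (2 * (d * (40 * d * (70 * d * y * b)))) :=
      Real.log_mul (by norm_num) (by positivity)
    linarith only [this, h4, e7, hθ, hbℓ', hℓ1]
  have e9 : Real.log (3 * d) ≤ 1.11 * ℓ := by
    rw [Real.log_mul (by norm_num) hd0.ne']; linarith
  have t1 : 40 * d * (70 * d * b) * (3 * d + d) * Real.log 2 ≤ 389 * U := by
    have : d * d * b * (20 * d) ≤ U := by rw [hU]; gcongr
    have h3 : 0 ≤ d * d * b * (20 * d) := by positivity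
    calc _ = 560 * (d * d * b * (20 * d)) * Real.log 2 := by ring
      _ ≤ 560 * (d * d * b * (20 * d)) * 0.69315 := by gcongr
      _ ≤ _ := by linarith
  have t2 : d * (70 * d * y * b) * (1 + Real.log ((1 + 3 * d) * (70 * d))) ≤ 469 * U := by
    calc _ ≤ d * (70 * d * y * b) * (6.7 * ℓ) := by gcongr
      _ = _ := by rw [hU]; ring
  have hy1 : y + 1 ≤ 1.05 * y := by linarith
  have t3 : d * (40 * d * (y + 1)) * (3 * b) ≤ 126 * U := by
    calc _ ≤ d * (40 * d * (1.05 * y)) * (3 * b) := by gcongr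
      _ = 126 * (d * d * b * (y * 1)) := by ring
      _ ≤ 126 * U := by rw [hU]; gcongr
  have t4 : d * (40 * d * (y + 1)) * Real.log (40 * d) ≤ 157.5 * U := by
    calc _ ≤ d * (40 * d * (1.05 * y)) * (3.75 * ℓ) := by
          gcongr
          exact Real.log_nonneg (by linarith only [hd])
      _ = 157.5 * (d * d * 1 * (y * ℓ)) := by ring
      _ ≤ 157.5 * U := by rw [hU]; gcongr
  have t5 : 40 * d * (y + 1) * Real.log y ≤ 132.3 * U := by
    calc _ ≤ 40 * d * (1.05 * y) * (3.15 * ℓ) := by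
          gcongr
          exact Real.log_nonneg (by linarith only [hy20])
      _ = 132.3 * (d * 1 * 1 * (y * ℓ)) := by ring
      _ ≤ 132.3 * U := by rw [hU]; gcongr
  have hbdℓ : 1 ≤ b * d * ℓ := by
    have h3 : 1 ≤ b * d := one_le_mul_of_one_le_of_one_le hb hd
    exact one_le_mul_of_one_le_of_one_le h3 hℓ1
  have t6 : (d + 40 * d * (y + 1)) * (Real.log 2 + lp) ≤ 74 * U := by
    calc _ ≤ (d + 40 * d * (1.05 * y)) * (1.7 * (b * d * ℓ)) := by
          gcongr
          linarith only [hθ, hlp, hbdℓ]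
      _ ≤ (43 * d * y) * (1.7 * (b * d * ℓ)) := by
          gcongr
          have : d * 1 ≤ d * y := by gcongr; linarith only [hy20]
          linarith only [this]
      _ = 73.1 * U := by rw [hU]; ring
      _ ≤ _ := by
          have : 0 ≤ U := by rw [hU]; positivity
          linarith
  have hUbℓ : 20 * (d * (b * ℓ)) ≤ U := by
    calc 20 * (d * (b * ℓ)) ≤ y * ((d * d) * (b * ℓ)) := by gcongr
      _ = U := by rw [hU]; ring
  have hdbℓ : b * ℓ ≤ d * (b * ℓ) := le_mul_of_one_le_left (by positivity) hd
  have t7 : d * Real.log (2 * (d * (40 * d * (70 * d * y * b)))) ≤ U := by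
    calc _ ≤ d * (14 * (b * ℓ)) := by gcongr
      _ ≤ U := by
          have : 0 ≤ d * (b * ℓ) := by positivity
          linarith only [hUbℓ, this]
  have hUpos : 0 < U := by rw [hU]; positivity
  have hfin : 40 * d * (70 * d * y * b) * ℓ / 2 = 1400 * U := by rw [hU]; ring
  rw [hfin]
  linarith only [t1, t2, t3, t4, t5, t6, t7, e8, e9, hUbℓ, hdbℓ, hbℓ', hUpos]

/-! ### Choice of the parameters -/

/-- The size `A` of the coefficients for the pigeonhole principle:
`A = ⌊R ^ ((N + 1) / (2 d))⌋`. -/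
lemma exists_box (R d N : ℕ) (hR : 1 ≤ R) (hd : 0 < d) (hN : 0 < N) :
    ∃ A : ℕ, 0 < A ∧ (d : ℝ) * Real.log A ≤ Real.log R * (N + 1) / 2 ∧
      R ^ (N * (N + 1) / 2) < (A + 1) ^ (d * N) := by
  have hR' : (1 : ℝ) ≤ R := by exact_mod_cast hR
  have hd' : (0 : ℝ) < d := by exact_mod_cast hd
  have hR0 : (0 : ℝ) < R := by linarith
  set x : ℝ := (R : ℝ) ^ (((N : ℝ) + 1) / (2 * d)) with hx
  have hx1 : 1 ≤ x := Real.one_le_rpow hR' (by positivity)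
  have hA : 0 < ⌊x⌋₊ := Nat.floor_pos.mpr hx1
  refine ⟨⌊x⌋₊, hA, ?_, ?_⟩
  · have h1 : Real.log (⌊x⌋₊ : ℝ) ≤ Real.log x :=
      Real.log_le_log (by exact_mod_cast hA) (Nat.floor_le (by linarith))
    rw [hx, Real.log_rpow hR0] at h1
    calc (d : ℝ) * Real.log ⌊x⌋₊ ≤ d * (((N : ℝ) + 1) / (2 * d) * Real.log R) := by gcongr
      _ = _ := by field_simp
  · have h1 : x < (⌊x⌋₊ : ℝ) + 1 := Nat.lt_floor_add_one x
    have h2 : x ^ (d * N) < ((⌊x⌋₊ : ℝ) + 1) ^ (d * N) := by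
      gcongr
    have h3 : x ^ (d * N) = (R : ℝ) ^ (N * (N + 1) / 2) := by
      rw [hx, ← Real.rpow_natCast, ← Real.rpow_mul hR0.le, ← Real.rpow_natCast]
      congr 1
      rw [Nat.cast_div (Nat.even_mul_succ_self N).two_dvd (by norm_num)]
      push_cast
      field_simp
    rw [h3] at h2
    exact_mod_cast h2

lemma log_auxLength (W A ν J Φ : ℝ) (hW : 0 < W) (hA : 0 < A) (hν : 0 < ν) (hJ : 0 < J)
    (hΦ : 0 < Φ) (m S : ℕ) :
    Real.log (W * (A * 2 ^ m * ν ^ S * J ^ S * Φ)) =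
      Real.log W + Real.log A + m * Real.log 2 + S * Real.log ν + S * Real.log J + Real.log Φ := by
  rw [Real.log_mul (by positivity) (by positivity), Real.log_mul (by positivity) (by positivity),
    Real.log_mul (by positivity) (by positivity), Real.log_mul (by positivity) (by positivity),
    Real.log_mul (by positivity) (by positivity), Real.log_pow, Real.log_pow, Real.log_pow]
  ring

lemma log_multiplier (LP LQ : ℝ) (hLP : 0 < LP) (hLQ : 0 < LQ) (m n : ℕ) :
    Real.log ((2 * LP) ^ m * (2 * LQ) ^ n) =
      m * (Real.log 2 + Real.log LP) + n * (Real.log 2 + Real.log LQ) := by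
  rw [Real.log_mul (by positivity) (by positivity), Real.log_pow, Real.log_pow,
    Real.log_mul (by positivity) (by positivity), Real.log_mul (by positivity) (by positivity)]

lemma log_smallValue (ν A W Φ R N1 t B : ℝ) (hν : 0 < ν) (hA : 0 < A) (hW : 0 < W) (hΦ : 0 < Φ)
    (hR : 0 < R) (hN1 : 0 < N1) (ht : 0 < t) (hB : 0 < B) (m n S : ℕ) :
    Real.log (ν ^ S * (2 * A * W * (Φ * 2 ^ m) / R ^ n * N1 * t ^ S) * B) =
      S * Real.log ν + Real.log 2 + Real.log A + Real.log W + Real.log Φ + m * Real.log 2 -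
        n * Real.log R + Real.log N1 + S * Real.log t + Real.log B := by
  rw [Real.log_mul (by positivity) (by positivity), Real.log_mul (by positivity) (by positivity),
    Real.log_mul (by positivity) (by positivity), Real.log_mul (by positivity) (by positivity),
    Real.log_div (by positivity) (by positivity),
    Real.log_mul (by positivity) (by positivity), Real.log_mul (by positivity) (by positivity),
    Real.log_mul (by positivity) (by positivity), Real.log_mul (by positivity) (by positivity),
    Real.log_pow, Real.log_pow, Real.log_pow, Real.log_pow]
  ring

lemma size_conditions (d b y J M : ℕ) (hd : 0 < d) (hb : 0 < b) (hJ : 0 < J) (hy20 : 20 ≤ y)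
    (hy21 : y ≤ 21 * d) (hM : M = 70 * d * b) :
    b ≤ M ∧ J * (y + 1) ≤ J * (3 * d * M) ∧ J * (y + 1) ≤ J * (M * y) ∧ M ≤ J * (M * y) ∧
      J * (M * y) < M * (J * (y + 1) + 1 - J) := by
  have hbd : b ≤ d * b := Nat.le_mul_of_pos_left b hd
  have hdb : d ≤ d * b := Nat.le_mul_of_pos_right d hb
  have hM0 : 0 < M := by rw [hM]; positivity
  have hMd : 70 * d ≤ M := by rw [hM, mul_assoc]; exact Nat.mul_le_mul_left 70 hdb
  refine ⟨by rw [hM, mul_assoc]; omega, Nat.mul_le_mul_left J ?_, Nat.mul_le_mul_left J ?_, ?_, ?_⟩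
  · calc y + 1 ≤ M := by omega
      _ ≤ 3 * d * M := Nat.le_mul_of_pos_left M (by omega)
  · calc y + 1 ≤ 2 * y := by omega
      _ ≤ M * y := Nat.mul_le_mul_right y (by omega)
  · calc M ≤ M * y := Nat.le_mul_of_pos_right M (by omega)
      _ ≤ J * (M * y) := Nat.le_mul_of_pos_left _ hJ
  · have h : J * (y + 1) + 1 - J = J * y + 1 := by rw [Nat.mul_add]; omega
    rw [h, Nat.mul_add]
    have : J * (M * y) = M * (J * y) := by ring
    omega

set_option maxHeartbeats 400000 in
/-- `core_lower_bound` for Feldman's polynomials and the chosen parameters; the condition `hnum` there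
is brought into the logarithmic form `hpar`. -/
theorem feldman_lower_bound (P : ℤ[X]) (hP : Irreducible P) (d : ℕ) (hd : P.natDegree = d)
    (hd0 : 0 < d) (hP0 : P.coeff 0 ≠ 0) (LP : ℝ) (hLP1 : 1 ≤ LP)
    (hLP : wnorm 1 (P.map (Int.castRingHom ℝ)) ≤ LP) (b y J M K S R N W Q ν : ℕ) (hb : 1 ≤ b)
    (hy20 : 20 ≤ y) (hy21 : y ≤ 21 * d) (hJ : J = 40 * d) (hM : M = 70 * d * b) (hR : R = 3 * d)
    (hQ : Q = 70 * d * y) (hK : K = Q * b) (hS : S = J * (y + 1)) (hN : N = J * K)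
    (hW : W = d * N) (hν : ν = Nat.lcmUpto b)
    (Φ : ℝ) (hΦ : Φ = (Real.exp 1 * ((1 + 3 * d) * (70 * d))) ^ K)
    (hpar : (J * M * (R + d) * Real.log 2 + d * Real.log Φ + d * S * Real.log ν +
      d * S * Real.log J + S * Real.log y + (d + S) * (Real.log 2 + Real.log LP) +
      d * (Real.log 2 + Real.log W) + (Real.log 2 + Real.log (N + 1)) + Real.log R / 2 <
        N * Real.log R / 2)) :
    Real.exp (-(N * Real.log R)) ≤ |aeval (Real.log 2) P| := by
  have hJ0 : 0 < J := by rw [hJ]; positivity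
  have hM0 : 0 < M := by rw [hM]; positivity
  have hR0 : 0 < R := by rw [hR]; positivity
  have hQ0 : 0 < Q := by rw [hQ]; positivity
  have hK0 : 0 < K := by rw [hK]; positivity
  have hN0 : 0 < N := by rw [hN]; positivity
  have hW0 : 0 < W := by rw [hW]; positivity
  have hν0 : 0 < ν := by rw [hν]; exact Nat.lcmUpto_pos b
  have hsz := size_conditions d b y J M hd0 hb hJ0 hy20 hy21 hM
  have hKM : K = M * y := by rw [hK, hQ, hM]; ring
  obtain ⟨A, hA0, hA1, hA2⟩ := exists_box R d N hR0 hd0 hN0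
  rw [← hW] at hA2
  have hbase : 1 ≤ Real.exp 1 * ((1 + 3 * (d : ℝ)) * (70 * d)) := by
    have hd1 : (1 : ℝ) ≤ d := by exact_mod_cast hd0
    have : 1 ≤ Real.exp 1 := Real.one_le_exp (by norm_num)
    have h3 : 1 ≤ (1 + 3 * (d : ℝ)) * (70 * d) :=
      one_le_mul_of_one_le_of_one_le (by linarith) (by linarith)
    exact one_le_mul_of_one_le_of_one_le this h3
  have hΦ1 : 1 ≤ Φ := by rw [hΦ]; exact one_le_pow₀ hbase
  have hΦ0 : 0 < Φ := by linarith
  obtain ⟨LQ, hLQ⟩ : ∃ LQ : ℝ, LQ = W * (A * 2 ^ (J * M) * ν ^ S * J ^ S * Φ) := ⟨_, rfl⟩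
  have hA0' : (0 : ℝ) < A := by exact_mod_cast hA0
  have hW0' : (0 : ℝ) < W := by exact_mod_cast hW0
  have hν0' : (0 : ℝ) < ν := by exact_mod_cast hν0
  have hJ0' : (0 : ℝ) < J := by exact_mod_cast hJ0
  have hR0' : (0 : ℝ) < R := by exact_mod_cast hR0
  have hM0' : (0 : ℝ) < M := by exact_mod_cast hM0
  have hN0' : (0 : ℝ) < N := by exact_mod_cast hN0
  have hb0' : (0 : ℝ) < b := by exact_mod_cast hb
  have hy0' : (0 : ℝ) < y := by exact_mod_cast (show 0 < y by omega)
  have hLQ0 : 0 < LQ := by rw [hLQ]; positivity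
  have hLP0 : 0 < LP := by linarith
  have hlogLQ := log_auxLength W A ν J Φ hW0' hA0' hν0' hJ0' hΦ0 (J * M) S
  rw [← hLQ] at hlogLQ
  obtain ⟨B, hB⟩ : ∃ B : ℝ, B = (2 * LP) ^ (d + S) * (2 * LQ) ^ d := ⟨_, rfl⟩
  have hB0 : 0 < B := by rw [hB]; positivity
  have hlogB := log_multiplier LP LQ hLP0 hLQ0 (d + S) d
  rw [← hB] at hlogB
  have ht : (N : ℝ) / M = J * y := by
    rw [hN, hKM]
    push_cast
    field_simp
  have hlogt : Real.log ((N : ℝ) / M) = Real.log J + Real.log y := by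
    rw [ht, Real.log_mul hJ0'.ne' hy0'.ne']
  have hlogS := log_smallValue ν A W Φ R (N + 1) (N / M) B hν0' hA0' hW0' hΦ0 hR0'
    (by positivity) (by positivity) hB0 (J * (R + 1) * M) N S
  rw [hlogt] at hlogS
  push_cast at hlogS hlogB hlogLQ
  have hlog2 : 0 < Real.log 2 := Real.log_pos (by norm_num)
  have hpos1 : 0 ≤ (J : ℝ) * M * R * Real.log 2 := by positivity
  have hpos2 : 0 ≤ (S : ℝ) * Real.log y :=
    mul_nonneg (by positivity) (Real.log_nonneg (by exact_mod_cast (show 1 ≤ y by omega)))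
  have hpos3 : 0 ≤ Real.log ((N : ℝ) + 1) := Real.log_nonneg (by linarith)
  have hBle : Real.log B + J * M * R * Real.log 2 + S * Real.log y +
      Real.log 2 + Real.log (N + 1) < N * Real.log R := by
    rw [hlogB, hlogLQ]
    linarith only [hpar, hA1]
  have hcore := core_lower_bound P hP d hd hd0 hP0
    (fun k : Fin Q × Fin b => feldman b k.1 k.2) (fun k => feldman_ne_zero b k.1 k.2)
    (by
      rintro ⟨q, r⟩ ⟨q', r'⟩ h
      simp only [natDegree_feldman] at h
      have h3 : (r : ℕ) = r' := by
        have := congrArg (· % b) h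
        simpa [Nat.add_mod, Nat.mod_eq_of_lt r.2, Nat.mod_eq_of_lt r'.2] using this
      have h4 : (q : ℕ) = q' := by
        rw [h3] at h
        exact Nat.eq_of_mul_eq_mul_right hb (Nat.add_right_cancel h)
      rw [Fin.ext h3, Fin.ext h4])
    K (by simp [hK])
    (by
      rintro ⟨q, r⟩
      simp only [natDegree_feldman]
      calc (q : ℕ) * b + r ≤ q * b + b := by have := r.2; omega
        _ = (q + 1) * b := by ring
        _ ≤ Q * b := Nat.mul_le_mul_right b q.2
        _ = K := hK.symm)
    J M R A S N W ν hN hW hJ0 hM0 hR0 hA0 hν0 hK0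
    (fun k m i => feldman_int b ν (by
      intro l hl hl'
      rw [hν]
      exact Finset.dvd_lcm (f := id) (Finset.mem_Icc.mpr ⟨hl, hl'⟩)) k.1 k.2 k.2.2.le m i)
    Φ hΦ1
    (by
      intro k x hx0 hxM
      have := wnorm_taylor_feldman_le ((R : ℝ) * M) x (by positivity)
        M b hb hsz.1 hx0 hxM Q k.1 k.2 k.1.2 k.2.2.le
      refine this.trans (le_of_eq ?_)
      rw [hΦ, hK, hR, hM]
      congr 2
      push_cast
      field_simp)
    (by rw [hS, hR]; exact hsz.2.1) (by rw [hS, hN, hKM]; exact hsz.2.2.1)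
    (by rw [hN, hKM]; exact hsz.2.2.2.1) (by rw [hS, hKM]; exact hsz.2.2.2.2)
    hA2 LP LQ hLP1 hLP hLQ
    (by
      rw [← hB, ← Real.log_lt_log_iff (by positivity) hLQ0, hlogLQ, hlogS]
      linarith only [hBle])
  rw [← hB] at hcore
  have hval : 0 < |aeval (Real.log 2) P| := by
    by_contra hcon
    have : |aeval (Real.log 2) P| * B ≤ 0 :=
      mul_nonpos_of_nonpos_of_nonneg (not_lt.mp hcon) hB0.le
    linarith
  have h3 := Real.log_le_log hLP0 hcore
  rw [Real.log_mul hval.ne' hB0.ne'] at h3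
  have h4 := Real.log_nonneg hLP1
  rw [← Real.le_log_iff_exp_le hval]
  linarith only [h3, h4, hBle, hpos1, hpos2, hpos3, hlog2]

/-- The lower bound for irreducible `P`, with `b = ⌈H / (d ℓ)⌉` and `y = ⌈20 d / ℓ⌉`, where
`ℓ = 1 + log d`. -/
lemma irreducible_lower_bound (P : ℤ[X]) (hP : Irreducible P) (d : ℕ) (hd : P.natDegree = d)
    (hd0 : 0 < d) (LP H : ℝ) (hLP1 : 1 ≤ LP) (hLP : wnorm 1 (P.map (Int.castRingHom ℝ)) ≤ LP)
    (hlp : Real.log LP ≤ H) (hH : d * (1 + Real.log d) ≤ H) :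
    Real.exp (-(130000 * (d ^ 2 / (1 + Real.log d)) * H)) ≤ |aeval (Real.log 2) P| := by
  have hd1 : (1 : ℝ) ≤ d := by exact_mod_cast hd0
  have hd0' : (0 : ℝ) < d := by linarith
  have hlogd : 0 ≤ Real.log d := Real.log_nonneg hd1
  obtain ⟨ℓ, hℓ⟩ : ∃ ℓ : ℝ, ℓ = 1 + Real.log d := ⟨_, rfl⟩
  rw [← hℓ] at hH ⊢
  have hℓ1 : 1 ≤ ℓ := by linarith
  have hℓ0 : 0 < ℓ := by linarith
  have hℓd : ℓ ≤ d := by linarith [Real.log_le_sub_one_of_pos hd0']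
  have hdℓ : 1 ≤ d * ℓ := one_le_mul_of_one_le_of_one_le hd1 hℓ1
  have hdℓ0 : 0 < d * ℓ := by linarith
  by_cases hP0 : P.coeff 0 = 0
  · -- then `P = ± X`
    have hXP : (X : ℤ[X]) ∣ P := X_dvd_iff.mpr hP0
    obtain ⟨u, hu⟩ := (prime_X.irreducible.associated_of_dvd hP hXP)
    have hval : |aeval (Real.log 2) P| = Real.log 2 := by
      obtain ⟨c, hc, hcu⟩ := Polynomial.isUnit_iff.mp u.isUnit
      rw [← hu, map_mul, aeval_X, ← hcu, aeval_C, abs_mul]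
      rcases Int.isUnit_iff.mp hc with rfl | rfl <;>
        simp [abs_of_nonneg (Real.log_nonneg (show (1 : ℝ) ≤ 2 by norm_num))]
    rw [hval, ← Real.le_log_iff_exp_le (Real.log_pos (by norm_num))]
    have h3 : -1 ≤ Real.log (Real.log 2) := by
      rw [Real.le_log_iff_exp_le (Real.log_pos (by norm_num)), Real.exp_neg]
      have h4 := Real.exp_one_gt_d9
      have h5 : (Real.exp 1)⁻¹ ≤ 2⁻¹ := inv_anti₀ (by norm_num) (by linarith)
      linarith [Real.log_two_gt_d9]
    have h4 : 1 ≤ d ^ 2 / ℓ := by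
      rw [le_div_iff₀ hℓ0]
      nlinarith
    have h5 : 1 ≤ d ^ 2 / ℓ * H := one_le_mul_of_one_le_of_one_le h4 (by linarith)
    linarith
  · have hH0 : 0 < H := by linarith
    obtain ⟨b, hb⟩ : ∃ b : ℕ, b = ⌈H / (d * ℓ)⌉₊ := ⟨_, rfl⟩
    obtain ⟨y, hy⟩ : ∃ y : ℕ, y = ⌈20 * d / ℓ⌉₊ := ⟨_, rfl⟩
    have hHd : 1 ≤ H / (d * ℓ) := by rwa [le_div_iff₀ hdℓ0, one_mul]
    have hb1 : H / (d * ℓ) ≤ b := by rw [hb]; exact Nat.le_ceil _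
    have hb2 : (b : ℝ) ≤ 2 * (H / (d * ℓ)) := by
      have := Nat.ceil_lt_add_one (show 0 ≤ H / (d * ℓ) by positivity)
      rw [← hb] at this
      linarith
    have hb0 : 1 ≤ b := by
      have : (1 : ℝ) ≤ b := by linarith
      exact_mod_cast this
    have hb0' : (1 : ℝ) ≤ b := by exact_mod_cast hb0
    have hy1 : 20 * d / ℓ ≤ y := by rw [hy]; exact Nat.le_ceil _
    have hy1' : 20 * d ≤ y * ℓ := by rwa [div_le_iff₀ hℓ0] at hy1
    have hy2' : y * ℓ ≤ 21 * d := by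
      have := Nat.ceil_lt_add_one (show 0 ≤ 20 * d / ℓ by positivity)
      rw [← hy] at this
      have h3 : (y : ℝ) * ℓ ≤ (20 * d / ℓ + 1) * ℓ := by gcongr
      have h4 : (20 * d / ℓ + 1) * ℓ = 20 * d + ℓ := by field_simp
      linarith
    have hy20 : (20 : ℝ) ≤ y := by
      by_contra hcon
      push Not at hcon
      nlinarith
    have hy21 : (y : ℝ) ≤ 21 * d := by nlinarith
    have hlpb : Real.log LP ≤ b * d * ℓ := by
      rw [div_le_iff₀ hdℓ0] at hb1
      linarith
    have hy0 : (0 : ℝ) < y := by linarith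
    have hpar := parameter_inequality d b y ℓ (Real.log LP) hd1 hb0' hy0 hℓ hy1' hy2'
      (Real.log_nonneg hLP1) hlpb
    have hν0 : 0 < Nat.lcmUpto b := Nat.lcmUpto_pos b
    have hν : Real.log (Nat.lcmUpto b) ≤ 3 * b := by
      rw [Real.log_le_iff_le_exp (by exact_mod_cast hν0)]
      exact lcmUpto_le_exp b hb0
    have hlog3 : 1 ≤ Real.log 3 := by
      rw [Real.le_log_iff_exp_le (by norm_num)]
      linarith [Real.exp_one_lt_d9]
    have hlog3' : Real.log 3 ≤ 1.105 :=
      (log_le_of_pow_le 3 (by norm_num) 17 27 (by norm_num) (by norm_num)).trans (by norm_num)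
    have hlog3d : Real.log (3 * d) = Real.log 3 + Real.log d :=
      Real.log_mul (by norm_num) hd0'.ne'
    obtain ⟨N, hN⟩ : ∃ N : ℕ, N = 40 * d * (70 * d * y * b) := ⟨_, rfl⟩
    have hN' : (N : ℝ) = 40 * d * (70 * d * y * b) := by rw [hN]; push_cast; ring
    have hmain := feldman_lower_bound P hP d hd hd0 hP0 LP hLP1 hLP b y (40 * d) (70 * d * b)
      (70 * d * y * b) (40 * d * (y + 1)) (3 * d) N (d * N) (70 * d * y) (Nat.lcmUpto b) hb0
      (by exact_mod_cast hy20) (by exact_mod_cast hy21) rfl rfl rfl rfl rfl rfl hN rfl rfl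
      _ rfl (by
        rw [Real.log_pow, Real.log_mul (by positivity) (by positivity), Real.log_exp]
        have hνS : (d : ℝ) * (40 * d * (y + 1)) * Real.log (Nat.lcmUpto b) ≤
          d * (40 * d * (y + 1)) * (3 * b) := by gcongr
        have hNρ : N * ℓ / 2 ≤ N * Real.log (3 * d) / 2 := by
          gcongr
          linarith
        have hW2 : Real.log (2 * (d * (N : ℝ))) = Real.log 2 + Real.log (d * N) :=
          Real.log_mul (by norm_num) (by rw [hN']; positivity)
        have hN2 : Real.log (2 * ((N : ℝ) + 1)) = Real.log 2 + Real.log (N + 1) :=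
          Real.log_mul (by norm_num) (by positivity)
        rw [← hN', hW2, hN2] at hpar
        push_cast
        linarith only [hpar, hνS, hNρ])
    refine le_trans ?_ hmain
    push_cast
    rw [Real.exp_le_exp, neg_le_neg_iff]
    calc (N : ℝ) * Real.log (3 * d) ≤ N * (1.105 * ℓ) := by
          gcongr
          linarith
      _ = 1.105 * 2800 * d ^ 2 * b * (y * ℓ) := by rw [hN']; ring
      _ ≤ 1.105 * 2800 * d ^ 2 * (2 * (H / (d * ℓ))) * (21 * d) := by gcongr
      _ = 1.105 * 2800 * 42 * (d ^ 2 / ℓ * H) := by field_simp; norm_num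
      _ ≤ 130000 * (d ^ 2 / ℓ * H) := by gcongr; norm_num
      _ = _ := by ring

/-! ### Reduction to irreducible polynomials -/

/-- Already `x / (1 + log x)` is increasing for `x ≥ 1`. -/
lemma one_add_log_div_mono (m n : ℕ) (hm : 0 < m) (hmn : m ≤ n) :
    (m : ℝ) ^ 2 / (1 + Real.log m) ≤ n ^ 2 / (1 + Real.log n) := by
  have hm1 : (1 : ℝ) ≤ m := by exact_mod_cast hm
  have hmn' : (m : ℝ) ≤ n := by exact_mod_cast hmn
  have hm0 : (0 : ℝ) < m := by linarith
  have hn0 : (0 : ℝ) < n := by linarith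
  have hlm : 0 ≤ Real.log m := Real.log_nonneg hm1
  have hln : 0 ≤ Real.log n := Real.log_nonneg (by linarith)
  rw [div_le_div_iff₀ (by linarith) (by linarith)]
  -- `log n - log m ≤ n / m - 1`
  have h1 : Real.log n - Real.log m ≤ n / m - 1 := by
    rw [← Real.log_div hn0.ne' hm0.ne']
    exact Real.log_le_sub_one_of_pos (by positivity)
  have h2 : m * (1 + Real.log n) ≤ n * (1 + Real.log m) := by
    have h3 : m * (Real.log n - Real.log m) ≤ m * (n / m - 1) := by gcongr
    have h4 : (m : ℝ) * (n / m - 1) = n - m := by field_simp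
    have h5 : m * Real.log m ≤ n * Real.log m := by gcongr
    linarith
  calc (m : ℝ) ^ 2 * (1 + Real.log n) = m * (m * (1 + Real.log n)) := by ring
    _ ≤ n * (n * (1 + Real.log m)) := by gcongr
    _ = _ := by ring

lemma one_le_mahlerMeasure_int (P : ℤ[X]) (hP : P ≠ 0) :
    1 ≤ (P.map (Int.castRingHom ℂ)).mahlerMeasure := by
  refine one_le_mahlerMeasure_of_one_le_norm_leadingCoeff ?_
  rw [leadingCoeff_map_of_injective (RingHom.injective_int _), eq_intCast, Complex.norm_intCast]
  exact_mod_cast Int.one_le_abs (leadingCoeff_ne_zero.mpr hP)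

lemma wnorm_one_le_mahlerMeasure (P : ℤ[X]) :
    wnorm 1 (P.map (Int.castRingHom ℝ)) ≤
      2 ^ P.natDegree * (P.map (Int.castRingHom ℂ)).mahlerMeasure := by
  have hdeg : (P.map (Int.castRingHom ℂ)).natDegree = P.natDegree :=
    natDegree_map_eq_of_injective (RingHom.injective_int _) P
  rw [wnorm_eq_sum_range 1 _ (P.natDegree + 1) (Nat.lt_succ_of_le natDegree_map_le)]
  calc _ ≤ ∑ i ∈ Finset.range (P.natDegree + 1),
        (P.natDegree.choose i : ℝ) * (P.map (Int.castRingHom ℂ)).mahlerMeasure := by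
        refine Finset.sum_le_sum fun i _ => ?_
        have := norm_coeff_le_choose_mul_mahlerMeasure i (P.map (Int.castRingHom ℂ))
        rw [hdeg, coeff_map, eq_intCast, Complex.norm_intCast] at this
        simpa using this
    _ = _ := by
        rw [← Finset.sum_mul]
        congr 1
        exact_mod_cast Nat.sum_range_choose P.natDegree

lemma mahlerMeasure_le_polyLength (P : ℤ[X]) :
    (P.map (Int.castRingHom ℂ)).mahlerMeasure ≤ polyLength P := by
  refine (mahlerMeasure_le_sum_norm_coeff _).trans (le_of_eq ?_)
  have hdeg : (P.map (Int.castRingHom ℂ)).natDegree = P.natDegree :=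
    natDegree_map_eq_of_injective (RingHom.injective_int _) P
  rw [Polynomial.sum_over_range _ (by simp), hdeg, polyLength]
  refine Finset.sum_congr rfl fun i _ => ?_
  rw [coeff_map, eq_intCast, Complex.norm_intCast]

/-- A lower bound whose exponent is additive in `P` over products: it follows from the irreducible
case by induction on the factorization. The degree bound `D` is kept fixed to make the factor in
front of the additive quantity the same for all the divisors of `P`. -/
theorem mahler_lower_bound (D : ℕ) (hD : 0 < D) (P : ℤ[X]) :
    P ≠ 0 → P.natDegree ≤ D →
    Real.exp (-(130000 * (D ^ 2 / (1 + Real.log D)) *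
      (Real.log (P.map (Int.castRingHom ℂ)).mahlerMeasure + (1 + Real.log D) * P.natDegree))) ≤
      |aeval (Real.log 2) P| := by
  have hD1 : (1 : ℝ) ≤ D := by exact_mod_cast hD
  have hℓ1 : 0 ≤ Real.log D := Real.log_nonneg hD1
  set c : ℝ := 130000 * (D ^ 2 / (1 + Real.log D)) with hc
  have hc0 : 0 ≤ c := by positivity
  induction P using WfDvdMonoid.induction_on_irreducible with
  | zero => intro h; exact absurd rfl h
  | unit u hu =>
    intro hu0 _
    obtain ⟨a, ha, rfl⟩ := Polynomial.isUnit_iff.mp hu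
    have hM := Real.log_nonneg (one_le_mahlerMeasure_int _ hu0)
    have hval : |aeval (Real.log 2) (C a)| = 1 := by
      rw [aeval_C]
      rcases Int.isUnit_iff.mp ha with rfl | rfl <;> simp
    rw [hval]
    refine Real.exp_le_one_iff.mpr (neg_nonpos.mpr ?_)
    positivity
  | mul a p ha hp ih =>
    intro hpa hdeg
    have hp0 := hp.ne_zero
    have hdegmul : (p * a).natDegree = p.natDegree + a.natDegree := natDegree_mul hp0 ha
    have hMp := one_le_mahlerMeasure_int p hp0
    have hMa := one_le_mahlerMeasure_int a ha
    have h1 := ih ha (by omega)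
    have h2 : Real.exp (-(c * (Real.log (p.map (Int.castRingHom ℂ)).mahlerMeasure +
        (1 + Real.log D) * p.natDegree))) ≤ |aeval (Real.log 2) p| := by
      have hlog := Real.log_nonneg hMp
      rcases Nat.eq_zero_or_pos p.natDegree with he | he
      · obtain ⟨z, rfl⟩ : ∃ z : ℤ, p = C z := ⟨_, eq_C_of_natDegree_eq_zero he⟩
        have hz : z ≠ 0 := fun h => hp0 (by rw [h, C_0])
        have hval : 1 ≤ |aeval (Real.log 2) (C z)| := by
          rw [aeval_C, algebraMap_int_eq, eq_intCast]
          exact_mod_cast Int.one_le_abs hz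
        refine le_trans (Real.exp_le_one_iff.mpr (neg_nonpos.mpr ?_)) hval
        positivity
      · have he1 : (1 : ℝ) ≤ p.natDegree := by exact_mod_cast he
        have heD : p.natDegree ≤ D := by omega
        have hle : 0 ≤ Real.log p.natDegree := Real.log_nonneg he1
        have hlogle : Real.log p.natDegree ≤ Real.log D :=
          Real.log_le_log (by linarith) (by exact_mod_cast heD)
        have h3 := irreducible_lower_bound p hp p.natDegree rfl he _
          (Real.log (p.map (Int.castRingHom ℂ)).mahlerMeasure +
            p.natDegree * (1 + Real.log p.natDegree))
          (one_le_mul_of_one_le_of_one_le (one_le_pow₀ (by norm_num)) hMp)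
          (wnorm_one_le_mahlerMeasure p)
          (by
            rw [Real.log_mul (by positivity) (by positivity), Real.log_pow, add_comm]
            gcongr
            linarith [Real.log_two_lt_d9])
          (by linarith)
        refine le_trans (Real.exp_le_exp.mpr (neg_le_neg ?_)) h3
        rw [hc, mul_comm (1 + Real.log (D : ℝ))]
        refine mul_le_mul (mul_le_mul_of_nonneg_left (one_add_log_div_mono _ _ he heD) (by norm_num))
          (by gcongr) (by positivity) (by positivity)
    rw [map_mul, abs_mul, Polynomial.map_mul, mahlerMeasure_mul,
      Real.log_mul (by positivity) (by positivity), hdegmul]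
    refine le_trans (le_of_eq ?_) (mul_le_mul h2 h1 (Real.exp_nonneg _) (abs_nonneg _))
    rw [← Real.exp_add]
    congr 1
    push_cast
    ring

/-- **Theorem 3, part 2.** For a nonzero `P ∈ ℤ[x]` with `deg P ≤ d`, `L(P) ≤ L`, `L ≥ 3`:
`|P(log 2)| ≥ exp(−2.6·10⁵ d² (log L + d log d) (1 + log d)⁻¹)`. -/
theorem log_two_transcendence_measure (P : Polynomial ℤ) (hP : P ≠ 0)
    (d : ℕ) (hd : P.natDegree ≤ d)
    (L : ℝ) (hL : polyLength P ≤ L) (hL3 : 3 ≤ L) :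
    Real.exp (-(260000 * d ^ 2 * (Real.log L + d * Real.log d) * (1 + Real.log d)⁻¹)) ≤
      |Polynomial.aeval (Real.log 2) P| := by
  rcases Nat.eq_zero_or_pos d with rfl | hd0
  · -- a nonzero integer has absolute value at least `1`
    obtain ⟨z, rfl⟩ : ∃ z : ℤ, P = C z := ⟨_, eq_C_of_natDegree_le_zero hd⟩
    have hz : z ≠ 0 := fun h => hP (by rw [h, C_0])
    have hval : 1 ≤ |aeval (Real.log 2) (C z)| := by
      rw [aeval_C, algebraMap_int_eq, eq_intCast]
      exact_mod_cast Int.one_le_abs hz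
    simpa using hval
  · refine le_trans (Real.exp_le_exp.mpr (neg_le_neg ?_)) (mahler_lower_bound d hd0 P hP hd)
    have hd1 : (1 : ℝ) ≤ d := by exact_mod_cast hd0
    have hlogd : 0 ≤ Real.log d := Real.log_nonneg hd1
    have hM1 := one_le_mahlerMeasure_int P hP
    have hML : Real.log (P.map (Int.castRingHom ℂ)).mahlerMeasure ≤ Real.log L :=
      Real.log_le_log (by linarith) ((mahlerMeasure_le_polyLength P).trans hL)
    have hlog3 : 1 ≤ Real.log 3 := by
      rw [Real.le_log_iff_exp_le (by norm_num)]
      linarith [Real.exp_one_lt_d9]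
    have hlogL : Real.log 3 ≤ Real.log L := Real.log_le_log (by norm_num) hL3
    have hdP : (1 + Real.log d) * P.natDegree ≤ (1 + Real.log d) * d := by gcongr
    -- `d ≤ log L + d log d`, because `L ≥ 3`
    have hkey : (d : ℝ) ≤ Real.log L + d * Real.log d := by
      rcases Nat.lt_or_ge d 3 with h3 | h3
      · interval_cases d
        · norm_num
          linarith
        · norm_num
          linarith [Real.log_two_gt_d9]
      · have h4 : 1 ≤ Real.log d :=
          hlog3.trans (Real.log_le_log (by norm_num) (by exact_mod_cast h3))
        have h5 : (d : ℝ) * 1 ≤ d * Real.log d := by gcongr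
        linarith
    calc _ ≤ 130000 * ((d : ℝ) ^ 2 / (1 + Real.log d)) * (2 * (Real.log L + d * Real.log d)) := by
          gcongr
          linarith
      _ = _ := by ring
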